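/- Let 0 → M' → M → M'' → 0 be a short exact sequence of finitely generated ℤ-graded R-modules with degree-preserving maps, and let d be the Krull dimension of M. Then for every complex number y the limits defining F(M',R,I,d)(y), F(M,R,I,d)(y) and F(M'',R,I,d)(y) exist and F(M,R,I,d)(y) = F(M',R,I,d)(y) + F(M'',R,I,d)(y). -/

import Mathlib

open Filter Complex

noncomputable section

/-- The Frobenius bracket power `I^{[q]}` of an ideal. -/
def bracketPow {R : Type*} [CommSemiring R] (I : Ideal R) (q : ℕ) : Ideal R :=
  Ideal.span ((fun x : R => x ^ q) '' (I : Set R))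

/-- `λ_k((M/N)_j)`. -/
def quotPieceDim (k : Type*) {R M : Type*} [Field k] [CommRing R] [Algebra k R]
    [AddCommGroup M] [Module R M] [Module k M] [IsScalarTower k R M]
    (ℳ : ℤ → Submodule k M) (N : Submodule R M) (j : ℤ) : ℕ :=
  Module.finrank k ((ℳ j).map (N.mkQ.restrictScalars k))

/-- `F_n(M,R,I,d)(y)`. -/
def FnGen (k : Type*) {R M : Type*} [Field k] [CommRing R] [Algebra k R]
    [AddCommGroup M] [Module R M] [Module k M] [IsScalarTower k R M]
    (ℳ : ℤ → Submodule k M) (I : Ideal R) (p d n : ℕ) (y : ℂ) : ℂ :=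
  (1 / (p : ℂ) ^ n) ^ d *
    ∑' j : ℤ, (quotPieceDim k (R := R) ℳ (bracketPow I (p ^ n) • ⊤) j : ℂ) *
      Complex.exp (-Complex.I * y * (j : ℂ) / (p : ℂ) ^ n)

/-!
By a homogeneous prime filtration, the sequence `u n` attached to `M` is, up to `O(p⁻ⁿ)`, the sum
of the sequences attached to domains `R ⧸ P`, provided that `u` is additive up to `O(p⁻ⁿ)` along
short exact sequences `0 → M' → M → M'' → 0`. Tensoring such a sequence with `R ⧸ I^[q]` can only
fail to be exact on the left. If the annihilator of `M` is radical, then some endomorphism `s` of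
`M'`, with `s` a nonzerodivisor modulo that annihilator, extends to a map `M → M'`, so the failure
is bounded by the length of a module of smaller dimension. In general `R` is first replaced by its
subalgebra `k[R^q]` for a large power `q` of `p`, whose image in `End M` is geometrically reduced.

If `R ⧸ P` is geometrically reduced, taking `p`-th powers preserves `k`-linear independence in it,
so `R ⧸ P` and its analogue over `k[R^p]` have the same Hilbert function up to multiplying degrees
by `p`. Filtering `R ⧸ P` as a module over `k[R^p]` therefore gives `u (n + 1) = ρ * u n + O(p⁻ⁿ)`
for a constant `ρ`, and together with the boundedness of `u` this forces convergence. Passing to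
`k[R^q]` once more reduces every `P` to this case.
-/

section Growth

theorem ringKrullDim_le_of_isIntegral_of_injective {A B : Type*} [CommRing A] [CommRing B]
    [Algebra A B] [Algebra.IsIntegral A B] (hinj : Function.Injective (algebraMap A B)) :
    ringKrullDim A ≤ ringKrullDim B := by
  refine iSup_le fun l => ?_
  obtain ⟨P, -, hP, hPl⟩ := Ideal.exists_ideal_over_prime_of_isIntegral l.head.asIdeal (⊥ : Ideal B)
    ((Ideal.comap_bot_of_injective _ hinj).trans_le bot_le)
  have : P.LiesOver l.head.asIdeal := ⟨hPl.symm⟩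
  obtain ⟨L, hL, -⟩ := Ideal.exists_ltSeries_of_hasGoingUp l P
  rw [← hL]
  exact le_iSup (fun l : LTSeries (PrimeSpectrum B) => ((l.length : ℕ∞) : WithBot ℕ∞)) L

open MvPolynomial

theorem monomial_smul_mem {k R M ι : Type*} [Field k] [CommRing R] [Algebra k R] [AddCommGroup M]
    [Module R M] [Module k M] {x : ι → R} {W : ℕ → Submodule k M} {D : ℕ}
    (hW : ∀ i δ, ∀ m ∈ W δ, x i • m ∈ W (δ + D)) (a : ι →₀ ℕ) {δ : ℕ} {m : M} (hm : m ∈ W δ) :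
    aeval x (monomial a (1 : k)) • m ∈ W (δ + D * a.degree) := by
  induction a using Finsupp.induction_linear generalizing δ m with
  | zero => simpa using hm
  | add a b ha hb =>
    rw [← one_mul (1 : k), ← monomial_mul, map_mul, mul_smul]
    convert ha (hb hm) using 2
    simp [mul_add, add_comm, add_left_comm]
  | single i n =>
    simp only [aeval_monomial, map_one, one_mul, pow_zero, Finsupp.prod_single_index,
      Finsupp.degree_single]
    induction n generalizing δ m with
    | zero => simpa using hm
    | succ n ih =>
      rw [pow_succ, mul_smul]
      convert ih (hW i δ m hm) using 2
      ring

variable {k R M : Type*} [Field k] [CommRing R] [Algebra k R] [AddCommGroup M] [Module R M]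
  [Module k M] [IsScalarTower k R M]

section PolynomialFiltration

variable {σ τ ι : Type*} [Fintype τ]

/-- The map `(c_j) ↦ ∑ c_j(z) g_j`. Its surjectivity expresses that `M` is finite over `k[z]`
without introducing a module structure over a polynomial ring. -/
def polynomialCombination (k : Type*) {R M σ τ : Type*} [Field k] [CommRing R] [Algebra k R]
    [AddCommGroup M] [Module R M] [Module k M] [IsScalarTower k R M] [Fintype τ]
    (z : σ → R) (g : τ → M) : (τ → MvPolynomial σ k) →ₗ[k] M :=
  ∑ j, ((LinearMap.toSpanSingleton R M (g j)).restrictScalars k ∘ₗ (aeval z).toLinearMap) ∘ₗ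
    LinearMap.proj j

theorem polynomialCombination_apply (z : σ → R) (g : τ → M) (c : τ → MvPolynomial σ k) :
    polynomialCombination k z g c = ∑ j, aeval z (c j) • g j := by
  simp [polynomialCombination]

/-- The combinations `∑ c_j(z) g_j` whose coefficients have total degree at most `δ`. -/
def polynomialFiltration (k : Type*) {R M σ τ : Type*} [Field k] [CommRing R] [Algebra k R]
    [AddCommGroup M] [Module R M] [Module k M] [IsScalarTower k R M] [Fintype τ]
    (z : σ → R) (g : τ → M) (δ : ℕ) : Submodule k M :=
  (Submodule.pi Set.univ fun _ => restrictTotalDegree σ k δ).map (polynomialCombination k z g)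

theorem mem_polynomialFiltration {z : σ → R} {g : τ → M} {δ : ℕ} {m : M} :
    m ∈ polynomialFiltration k z g δ ↔
      ∃ c : τ → MvPolynomial σ k, (∀ j, (c j).totalDegree ≤ δ) ∧
        ∑ j, aeval z (c j) • g j = m := by
  simp [polynomialFiltration, polynomialCombination_apply, mem_restrictTotalDegree]

theorem polynomialFiltration_mono (z : σ → R) (g : τ → M) :
    Monotone (polynomialFiltration k z g) := by
  intro δ ε h m hm
  obtain ⟨c, hc, rfl⟩ := mem_polynomialFiltration.1 hm
  exact mem_polynomialFiltration.2 ⟨c, fun j => (hc j).trans h, rfl⟩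

theorem mem_polynomialFiltration_zero (z : σ → R) (g : τ → M) (j : τ) :
    g j ∈ polynomialFiltration k z g 0 := by
  classical
  refine mem_polynomialFiltration.2 ⟨Pi.single j 1, fun i => ?_, ?_⟩
  · rcases eq_or_ne i j with rfl | h <;> simp [*]
  · simp [Pi.single_apply, apply_ite, ite_smul]

theorem finrank_polynomialFiltration_le [Fintype σ] (z : σ → R) (g : τ → M) (δ : ℕ) :
    Module.Finite k (polynomialFiltration k z g δ) ∧
      Module.finrank k (polynomialFiltration k z g δ) ≤
        Fintype.card τ * (δ + 1) ^ Fintype.card σ := by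
  classical
  let V : Submodule k (τ → MvPolynomial σ k) :=
    Submodule.pi Set.univ fun _ => restrictTotalDegree σ k δ
  let coeffs : (τ → MvPolynomial σ k) →ₗ[k] (τ × (σ → Fin (δ + 1)) → k) :=
    LinearMap.pi fun ja =>
      lcoeff k (Finsupp.equivFunOnFinite.symm fun i => (ja.2 i : ℕ)) ∘ₗ LinearMap.proj ja.1
  have hinj : Function.Injective (coeffs ∘ₗ V.subtype) := by
    rw [injective_iff_map_eq_zero]
    rintro ⟨c, hc⟩ hcoeffs
    ext j a
    by_contra hne
    have ha : ∀ i, a i ≤ δ := fun i =>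
      ((le_degreeOf_of_mem_support i (mem_support_iff.2 hne)).trans
        (degreeOf_le_totalDegree _ _)).trans ((mem_restrictTotalDegree _ _ _).1 (hc j trivial))
    refine hne ((congrArg (fun p => coeff p (c j)) ?_).trans
      (congrFun hcoeffs (j, fun i => ⟨a i, Nat.lt_succ_of_le (ha i)⟩)))
    ext i
    simp
  have : Module.Finite k V := Module.Finite.of_injective _ hinj
  refine ⟨Module.Finite.map _ _, (Submodule.finrank_map_le _ V).trans ?_⟩
  simpa using LinearMap.finrank_le_finrank_of_injective hinj

theorem exists_smul_mem_polynomialFiltration [Finite ι] (x : ι → R) {z : σ → R} {g : τ → M}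
    (hg : Function.Surjective (polynomialCombination k z g)) :
    ∃ D : ℕ, ∀ i δ, ∀ m ∈ polynomialFiltration k z g δ,
      x i • m ∈ polynomialFiltration k z g (δ + D) := by
  choose e he using fun (i : ι) (j : τ) => hg (x i • g j)
  simp only [polynomialCombination_apply] at he
  obtain ⟨D, hD⟩ := (Set.finite_range fun t : ι × τ × τ =>
    (e t.1 t.2.1 t.2.2).totalDegree).bddAbove
  refine ⟨D, fun i δ m hm => ?_⟩
  obtain ⟨c, hc, rfl⟩ := mem_polynomialFiltration.1 hm
  refine mem_polynomialFiltration.2 ⟨fun l => ∑ j, c j * e i j l, fun l => ?_, ?_⟩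
  · exact totalDegree_finsetSum_le fun j _ => (totalDegree_mul _ _).trans
      (add_le_add (hc j) (hD ⟨(i, j, l), rfl⟩))
  · simp only [map_sum, map_mul, Finset.sum_smul, mul_smul, Finset.smul_sum]
    rw [Finset.sum_comm]
    refine Finset.sum_congr rfl fun j _ => ?_
    rw [← Finset.smul_sum, he, smul_comm]

end PolynomialFiltration

theorem aeval_smul_mem_sup {ι : Type*} [Fintype ι] {x : ι → R} {W : ℕ → Submodule k M}
    (hmono : Monotone W) {D : ℕ} (hW : ∀ i δ, ∀ m ∈ W δ, x i • m ∈ W (δ + D)) {q : ℕ}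
    {Q : Submodule R M} (hQ : ∀ i m, x i ^ q • m ∈ Q) {m : M} (hm : m ∈ W 0)
    (b : MvPolynomial ι k) :
    aeval x b • m ∈ W (D * (Fintype.card ι * q)) ⊔ Q.restrictScalars k := by
  induction b using MvPolynomial.induction_on' with
  | add b c hb hc => rw [map_add, add_smul]; exact add_mem hb hc
  | monomial a c =>
    rw [show monomial a c = c • monomial a (1 : k) by simp [smul_monomial], map_smul, smul_assoc]
    refine Submodule.smul_mem _ _ ?_
    by_cases ha : ∀ i, a i ≤ q
    · refine Submodule.mem_sup_left (hmono ?_ (monomial_smul_mem hW a hm))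
      rw [zero_add, Finsupp.degree_eq_sum]
      gcongr
      simpa using Finset.sum_le_sum fun i (_ : i ∈ Finset.univ) => ha i
    · push Not at ha
      obtain ⟨i, hi⟩ := ha
      have hsplit : monomial a (1 : k) = X i ^ q * monomial (a - Finsupp.single i q) 1 := by
        rw [X_pow_eq_monomial, monomial_mul, one_mul,
          add_tsub_cancel_of_le (Finsupp.single_le_iff.2 hi.le)]
      rw [hsplit, map_mul, map_pow, aeval_X, mul_smul]
      exact Submodule.mem_sup_right (hQ _ _)

theorem sup_eq_top_of_pow_smul_mem {ι τ : Type*} [Fintype ι] {x : ι → R}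
    (hx : Algebra.adjoin k (Set.range x) = ⊤) {g : τ → M} (hg : Submodule.span R (Set.range g) = ⊤)
    {W : ℕ → Submodule k M} (hmono : Monotone W) (hgW : ∀ j, g j ∈ W 0) {D : ℕ}
    (hW : ∀ i δ, ∀ m ∈ W δ, x i • m ∈ W (δ + D)) {q : ℕ} {Q : Submodule R M}
    (hQ : ∀ i m, x i ^ q • m ∈ Q) :
    W (D * (Fintype.card ι * q)) ⊔ Q.restrictScalars k = ⊤ := by
  have hsurj : Function.Surjective (aeval x : MvPolynomial ι k →ₐ[k] R) := by
    rwa [← AlgHom.range_eq_top, ← Algebra.adjoin_range_eq_range_aeval]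
  refine eq_top_iff.2 fun m _ => ?_
  obtain ⟨c, rfl⟩ := Finsupp.mem_span_range_iff_exists_finsupp.1
    (hg ▸ Submodule.mem_top : m ∈ Submodule.span R (Set.range g))
  refine sum_mem fun j _ => ?_
  obtain ⟨b, hb⟩ := hsurj (c j)
  exact hb ▸ aeval_smul_mem_sup hmono hW hQ (hgW j) b

theorem exists_finrank_quotient_le_of_surjective {σ τ ι : Type*} [Fintype σ] [Fintype τ]
    [Finite ι] {z : σ → R} {g : τ → M} (hg : Function.Surjective (polynomialCombination k z g))
    {x : ι → R} (hx : Algebra.adjoin k (Set.range x) = ⊤) :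
    ∃ C : ℕ, ∀ q : ℕ, 1 ≤ q → ∀ Q : Submodule R M, (∀ i m, x i ^ q • m ∈ Q) →
      Module.Finite k (M ⧸ Q) ∧ Module.finrank k (M ⧸ Q) ≤ C * q ^ Fintype.card σ := by
  cases nonempty_fintype ι
  obtain ⟨D, hD⟩ := exists_smul_mem_polynomialFiltration x hg
  have hspan : Submodule.span R (Set.range g) = ⊤ := by
    refine eq_top_iff.2 fun m _ => ?_
    obtain ⟨c, rfl⟩ := hg m
    rw [polynomialCombination_apply]
    exact sum_mem fun j _ => Submodule.smul_mem _ _ (Submodule.subset_span ⟨j, rfl⟩)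
  let r := Fintype.card ι
  refine ⟨Fintype.card τ * (D * r + 1) ^ Fintype.card σ, fun q hq Q hQ => ?_⟩
  set W := polynomialFiltration k z g (D * (r * q))
  obtain ⟨hfin, hle⟩ := finrank_polynomialFiltration_le (k := k) z g (D * (r * q))
  have hsurj : Function.Surjective ((Q.mkQ.restrictScalars k) ∘ₗ W.subtype) := by
    intro v
    obtain ⟨m, rfl⟩ := Q.mkQ_surjective v
    have hm : m ∈ W ⊔ Q.restrictScalars k :=
      sup_eq_top_of_pow_smul_mem hx hspan (polynomialFiltration_mono z g)
        (mem_polynomialFiltration_zero z g) hD hQ ▸ Submodule.mem_top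
    obtain ⟨w, hw, u, hu, rfl⟩ := Submodule.mem_sup.1 hm
    exact ⟨⟨w, hw⟩, (Submodule.Quotient.eq Q).2 (by simpa using hu)⟩
  refine ⟨Module.Finite.of_surjective _ hsurj,
    (LinearMap.finrank_le_finrank_of_surjective hsurj).trans (hle.trans ?_)⟩
  rw [mul_assoc, ← mul_pow]
  gcongr
  nlinarith

theorem exists_le_exists_finite_algHom_mvPolynomial (k S : Type*) [Field k] [CommRing S]
    [Algebra k S] [Algebra.FiniteType k S] {d : ℕ} (hd : ringKrullDim S ≤ d) :
    ∃ s ≤ d, ∃ φ : MvPolynomial (Fin s) k →ₐ[k] S, φ.Finite := by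
  obtain hS | hS := subsingleton_or_nontrivial S
  · exact ⟨0, d.zero_le, aeval 0, .of_surjective _ (Function.surjective_to_subsingleton _)⟩
  obtain ⟨s, φ, hinj, hfin⟩ := exists_finite_inj_algHom_of_fg k S
  refine ⟨s, ?_, φ, hfin⟩
  have hfin : φ.toRingHom.Finite := hfin
  algebraize [φ.toRingHom]
  have : Algebra.IsIntegral (MvPolynomial (Fin s) k) S := Algebra.IsIntegral.of_finite _ _
  have h := (ringKrullDim_le_of_isIntegral_of_injective (A := MvPolynomial (Fin s) k) (B := S)
    hinj).trans hd
  simpa [MvPolynomial.ringKrullDim_of_isNoetherianRing] using h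

theorem exists_surjective_polynomialCombination (k : Type*) {R M : Type*} [Field k] [CommRing R]
    [Algebra k R] [AddCommGroup M] [Module R M] [Module k M] [IsScalarTower k R M]
    [Algebra.FiniteType k R] [Module.Finite R M] {d : ℕ} (hd : Module.supportDim R M ≤ d) :
    ∃ (s : ℕ) (τ : Type) (_ : Fintype τ) (z : Fin s → R) (g : τ → M),
      s ≤ d ∧ Function.Surjective (polynomialCombination k z g) := by
  rw [Module.supportDim_eq_ringKrullDim_quotient_annihilator] at hd
  set S := R ⧸ Module.annihilator R M
  obtain ⟨s, hs, φ, hfin⟩ := exists_le_exists_finite_algHom_mvPolynomial k S hd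
  have hfin : φ.toRingHom.Finite := hfin
  algebraize [φ.toRingHom]
  obtain ⟨t, b, hb⟩ := Module.Finite.exists_fin (R := MvPolynomial (Fin s) k) (M := S)
  obtain ⟨u, g, hg⟩ := Module.Finite.exists_fin (R := R) (M := M)
  choose z hz using fun i => Ideal.Quotient.mk_surjective (φ (X i))
  choose c hc using fun j => Ideal.Quotient.mk_surjective (b j)
  have hφ : (Ideal.Quotient.mkₐ k _).comp (aeval z) = φ := MvPolynomial.algHom_ext fun i => by
    simpa using hz i
  refine ⟨s, Fin u × Fin t, inferInstance, z, fun ij => c ij.2 • g ij.1, hs, fun m => ?_⟩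
  obtain ⟨r, rfl⟩ := (Submodule.mem_span_range_iff_exists_fun R).1 (hg ▸ Submodule.mem_top : m ∈ _)
  choose P hP using fun i => (Submodule.mem_span_range_iff_exists_fun (MvPolynomial (Fin s) k)).1
    (hb ▸ Submodule.mem_top : Ideal.Quotient.mk (Module.annihilator R M) (r i) ∈ _)
  refine ⟨fun ij => P ij.1 ij.2, ?_⟩
  rw [polynomialCombination_apply, Fintype.sum_prod_type]
  refine Finset.sum_congr rfl fun i _ => ?_
  have hr : r i - ∑ j, aeval z (P i j) * c j ∈ Module.annihilator R M := by
    rw [← Ideal.Quotient.eq_zero_iff_mem, map_sub, ← hP, sub_eq_zero, map_sum]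
    refine Finset.sum_congr rfl fun j _ => ?_
    rw [map_mul, hc, Algebra.smul_def]
    exact congrArg (· * b j) (DFunLike.congr_fun hφ (P i j)).symm
  have hrg := Module.mem_annihilator.1 hr (g i)
  rw [sub_smul, sub_eq_zero] at hrg
  rw [hrg, Finset.sum_smul]
  simp only [mul_smul]

theorem exists_adjoin_eq_top_of_surjective [Algebra.FiniteType k R] {I : Ideal R}
    (hI : Function.Surjective (algebraMap k (R ⧸ I.radical))) :
    ∃ (n : ℕ) (x : Fin n → R), Algebra.adjoin k (Set.range x) = ⊤ ∧ ∀ i, x i ∈ I.radical := by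
  obtain ⟨n, f, hf⟩ := Algebra.FiniteType.iff_quotient_mvPolynomial''.1
    (inferInstance : Algebra.FiniteType k R)
  choose c hc using fun i => hI (Ideal.Quotient.mk _ (f (X i)))
  refine ⟨n, fun i => f (X i) - algebraMap k R (c i), ?_, fun i => ?_⟩
  · rw [Algebra.adjoin_range_eq_range_aeval, AlgHom.range_eq_top]
    refine hf.forall.2 fun P => ⟨aeval (fun i => X i + C (c i)) P, ?_⟩
    rw [← AlgHom.comp_apply]
    refine DFunLike.congr_fun (MvPolynomial.algHom_ext fun i => ?_) P
    simp [← MvPolynomial.algebraMap_eq]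
  · rw [← Ideal.Quotient.eq_zero_iff_mem, map_sub, ← hc, sub_eq_zero]
    rfl

theorem pow_mem_bracketPow {I : Ideal R} {x : R} {c : ℕ} (h : x ^ c ∈ I) (q : ℕ) :
    x ^ (c * q) ∈ bracketPow I q := by
  rw [pow_mul]
  exact Ideal.subset_span ⟨_, h, rfl⟩

theorem exists_finrank_quotient_le [Algebra.FiniteType k R] [Module.Finite R M] {I : Ideal R}
    (hI : Function.Surjective (algebraMap k (R ⧸ I.radical))) {d : ℕ}
    (hd : Module.supportDim R M ≤ d) :
    ∃ C : ℕ, ∀ q : ℕ, 1 ≤ q → ∀ Q : Submodule R M, bracketPow I q • ⊤ ≤ Q →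
      Module.Finite k (M ⧸ Q) ∧ Module.finrank k (M ⧸ Q) ≤ C * q ^ d := by
  obtain ⟨n, x, hx, hxI⟩ := exists_adjoin_eq_top_of_surjective hI
  obtain ⟨c, hc⟩ := Ideal.exists_pow_le_of_le_radical_of_fg (I := Ideal.span (Set.range x))
    (Ideal.span_le.2 (Set.range_subset_iff.2 hxI)) (Submodule.fg_span (Set.finite_range x))
  obtain ⟨s, τ, _, z, g, hs, hg⟩ := exists_surjective_polynomialCombination k hd
  obtain ⟨C, hC⟩ := exists_finrank_quotient_le_of_surjective hg hx
  refine ⟨C * (c + 1) ^ d, fun q hq Q hQ => ?_⟩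
  have hxc (i) : x i ^ (c + 1) ∈ I :=
    I.pow_mem_of_pow_mem (hc (Ideal.pow_mem_pow (Ideal.subset_span (Set.mem_range_self i)) c))
      c.le_succ
  obtain ⟨hfin, hle⟩ := hC ((c + 1) * q) (by nlinarith) Q fun i m =>
    hQ (Submodule.smul_mem_smul (pow_mem_bracketPow (hxc i) q) trivial)
  refine ⟨hfin, hle.trans ?_⟩
  rw [Fintype.card_fin, mul_assoc, ← mul_pow]
  gcongr
  nlinarith

end Growth

section LengthAdditivity

theorem isSemisimpleRing_of_isUnit_of_mem_nonZeroDivisors {R : Type*} [CommRing R]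
    [IsNoetherianRing R] [IsReduced R] (h : ∀ a ∈ nonZeroDivisors R, IsUnit a) :
    IsSemisimpleRing R := by
  have hmin : (minimalPrimes R).Finite := minimalPrimes.finite_of_isNoetherianRing R
  have hmax (m : Ideal R) (hm : m.IsMaximal) : m ∈ minimalPrimes R := by
    have hcover : (m : Set R) ⊆ ⋃ P ∈ hmin.toFinset, ((id P : Ideal R) : Set R) := by
      intro a ha
      have hdiv : a ∉ nonZeroDivisors R := fun h' => hm.ne_top (m.eq_top_of_isUnit_mem ha (h a h'))
      obtain ⟨b, hab, hb⟩ : ∃ b, b * a = 0 ∧ b ≠ 0 := by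
        simpa [mem_nonZeroDivisors_iff_right] using hdiv
      have hunion := Ideal.iUnion_minimalPrimes (I := (⊥ : Ideal R))
      rw [show (⊥ : Ideal R).radical = ⊥ from nilradical_eq_zero R] at hunion
      have ha' : a ∈ ⋃ P ∈ (⊥ : Ideal R).minimalPrimes, (P : Set R) :=
        hunion ▸ ⟨b, by simpa using hb, by simpa [mul_comm] using hab⟩
      simpa [minimalPrimes] using ha'
    obtain ⟨P, hP, hmP⟩ := (Ideal.subset_union_prime (s := hmin.toFinset) (f := id) ⊥ ⊥
      fun P hP _ _ => (hmin.mem_toFinset.1 hP).1.1).1 hcover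
    have hP := hmin.mem_toFinset.1 hP
    exact hm.eq_of_le hP.1.1.ne_top hmP ▸ hP
  have : Ring.KrullDimLE 0 R := Ring.krullDimLE_zero_iff.2 fun P hP => by
    obtain ⟨m, hm, hPm⟩ := Ideal.exists_le_maximal P hP.ne_top
    rwa [le_antisymm hPm ((hmax m hm).2 ⟨hP, bot_le⟩ hPm)]
  have : IsArtinianRing R :=
    isArtinianRing_iff_isNoetherianRing_krullDimLE_zero.2 ⟨inferInstance, this⟩
  exact IsArtinianRing.isSemisimpleRing_of_isReduced R

theorem exists_smul_retraction_of_isReduced {S M' M : Type*} [CommRing S] [IsNoetherianRing S]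
    [IsReduced S] [AddCommGroup M'] [Module S M'] [AddCommGroup M] [Module S M] [Module.Finite S M]
    [Module.Finite S M'] (f : M' →ₗ[S] M) (hf : Function.Injective f) :
    ∃ s ∈ nonZeroDivisors S, ∃ π : M →ₗ[S] M', ∀ x, π (f x) = s • x := by
  let W := nonZeroDivisors S
  have : IsReduced (FractionRing S) := isReduced_localizationPreserves W (FractionRing S) ‹_›
  have : IsNoetherianRing (FractionRing S) := IsLocalization.isNoetherianRing W _ ‹_›
  have : IsSemisimpleRing (FractionRing S) :=
    isSemisimpleRing_of_isUnit_of_mem_nonZeroDivisors fun a ha => by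
      rwa [IsFractionRing.nonZeroDivisors_eq_isUnit S (FractionRing S)] at ha
  have : Module.FinitePresentation S M := Module.finitePresentation_of_finite S M
  let ι' := LocalizedModule.mkLinearMap W M'
  let ι := LocalizedModule.mkLinearMap W M
  let F := (IsLocalizedModule.map W ι' ι f).extendScalarsOfIsLocalization W (FractionRing S)
  obtain ⟨r, hr⟩ := IsSemisimpleModule.extension_property F
    (IsLocalizedModule.map_injective W _ _ f hf) LinearMap.id
  obtain ⟨π, s, hπ⟩ := Module.FinitePresentation.exists_lift_of_isLocalizedModule W ι'
    ((r.restrictScalars S) ∘ₗ ι)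
  have hretract : ι' ∘ₗ (π ∘ₗ f) = ι' ∘ₗ (s • LinearMap.id) := by
    ext x
    have hlift := LinearMap.congr_fun hπ (f x)
    have hF : F (ι' x) = ι (f x) := IsLocalizedModule.map_apply W _ _ f x
    have hrF := LinearMap.congr_fun hr (ι' x)
    simp only [LinearMap.comp_apply, LinearMap.id_apply, LinearMap.smul_apply,
      LinearMap.restrictScalars_apply, hF] at hlift hrF ⊢
    rw [hlift, hrF, Submonoid.smul_def, Submonoid.smul_def, map_smul]
  obtain ⟨t, ht⟩ := Module.Finite.exists_smul_of_comp_eq_of_isLocalizedModule W ι' _ _ hretract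
  refine ⟨t * s, mul_mem t.2 s.2, (t : S) • π, fun x => ?_⟩
  simpa [Submonoid.smul_def, mul_smul] using LinearMap.congr_fun ht x

theorem exists_smul_retraction {R M' M : Type*} [CommRing R] [IsNoetherianRing R]
    [AddCommGroup M'] [Module R M'] [AddCommGroup M] [Module R M] [Module.Finite R M]
    [Module.Finite R M'] (hrad : (Module.annihilator R M).IsRadical) (f : M' →ₗ[R] M)
    (hf : Function.Injective f) :
    ∃ s : R, Ideal.Quotient.mk (Module.annihilator R M) s ∈ nonZeroDivisors _ ∧
      ∃ π : M →ₗ[R] M', ∀ x, π (f x) = s • x := by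
  set A := Module.annihilator R M
  have tM : Module.IsTorsionBySet R M A :=
    (Module.isTorsionBySet_iff_subset_annihilator _ _).2 subset_rfl
  have tM' : Module.IsTorsionBySet R M' A :=
    (Module.isTorsionBySet_iff_subset_annihilator _ _).2 (f.annihilator_le_of_injective hf)
  let _ := tM.module
  let _ := tM'.module
  have : IsScalarTower R (R ⧸ A) M := tM.isScalarTower
  have : IsScalarTower R (R ⧸ A) M' := tM'.isScalarTower
  have : IsReduced (R ⧸ A) := (Ideal.isRadical_iff_quotient_reduced A).1 hrad
  have : Module.Finite (R ⧸ A) M := .of_restrictScalars_finite R _ _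
  have : Module.Finite (R ⧸ A) M' := .of_restrictScalars_finite R _ _
  obtain ⟨s, hs, π, hπ⟩ := exists_smul_retraction_of_isReduced
    (f.extendScalarsOfSurjective (S := R ⧸ A) Ideal.Quotient.mk_surjective) hf
  obtain ⟨s, rfl⟩ := Ideal.Quotient.mk_surjective s
  exact ⟨s, hs, π.restrictScalars R, hπ⟩

theorem finrank_add_finrank_quotient_range_le {k V' V : Type*} [Field k] [AddCommGroup V']
    [AddCommGroup V] [Module k V'] [Module k V] [Module.Finite k V'] [Module.Finite k V]
    (a : V' →ₗ[k] V) (s : V' →ₗ[k] V') (h : LinearMap.ker a ≤ LinearMap.ker s) :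
    Module.finrank k V' + Module.finrank k (V ⧸ LinearMap.range a) ≤
      Module.finrank k V + Module.finrank k (V' ⧸ LinearMap.range s) := by
  have hrank_a := LinearMap.finrank_range_add_finrank_ker a
  have hrank_s := LinearMap.finrank_range_add_finrank_ker s
  have hcoker_a := Submodule.finrank_quotient_add_finrank (LinearMap.range a)
  have hcoker_s := Submodule.finrank_quotient_add_finrank (LinearMap.range s)
  have hker := Submodule.finrank_mono h
  omega

variable {k R M' M : Type*} [Field k] [CommRing R] [Algebra k R]
  [AddCommGroup M'] [Module R M'] [Module k M'] [IsScalarTower k R M']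
  [AddCommGroup M] [Module R M] [Module k M] [IsScalarTower k R M]

theorem finrank_quotient_quotient_map (k : Type*) {R M : Type*} [Field k] [CommRing R]
    [Algebra k R] [AddCommGroup M] [Module R M] [Module k M] [IsScalarTower k R M]
    (P Q : Submodule R M) :
    Module.finrank k ((M ⧸ P) ⧸ Q.map P.mkQ) = Module.finrank k (M ⧸ P ⊔ Q) :=
  ((Submodule.quotientQuotientEquivQuotientSup P Q).restrictScalars k).finrank_eq

theorem map_mkQ_smul_top (P : Submodule R M) (J : Ideal R) :
    (J • (⊤ : Submodule R M)).map P.mkQ = J • ⊤ := by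
  rw [Submodule.map_smul'', Submodule.map_top, Submodule.range_mkQ]

theorem finrank_quotient_range_mapQ {P : Submodule R M'} {Q : Submodule R M} (f : M' →ₗ[R] M)
    (h : P ≤ Q.comap f) :
    Module.finrank k ((M ⧸ Q) ⧸ LinearMap.range ((Submodule.mapQ P Q f h).restrictScalars k)) =
      Module.finrank k (M ⧸ LinearMap.range f ⊔ Q) := by
  rw [sup_comm, ← finrank_quotient_quotient_map, ← Submodule.range_mapQ P Q f h]
  exact (Submodule.Quotient.restrictScalarsEquiv k
    (LinearMap.range (Submodule.mapQ P Q f h))).finrank_eq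

theorem finrank_add_finrank_le_of_smul_retraction {f : M' →ₗ[R] M} {π : M →ₗ[R] M'} {s : R}
    (hπ : ∀ x, π (f x) = s • x) (J : Ideal R) [Module.Finite k (M' ⧸ J • (⊤ : Submodule R M'))]
    [Module.Finite k (M ⧸ J • (⊤ : Submodule R M))] :
    Module.finrank k (M' ⧸ J • (⊤ : Submodule R M')) +
        Module.finrank k (M ⧸ LinearMap.range f ⊔ J • ⊤) ≤
      Module.finrank k (M ⧸ J • (⊤ : Submodule R M)) +
        Module.finrank k (M' ⧸ LinearMap.range (LinearMap.lsmul R M' s) ⊔ J • ⊤) := by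
  rw [← finrank_quotient_range_mapQ f (Submodule.smul_top_le_comap_smul_top J f),
    ← finrank_quotient_range_mapQ _ (Submodule.smul_top_le_comap_smul_top J _)]
  refine finrank_add_finrank_quotient_range_le _ _ fun v hv => ?_
  obtain ⟨x, rfl⟩ := Submodule.mkQ_surjective _ v
  have hfx : f x ∈ J • (⊤ : Submodule R M) := (Submodule.Quotient.mk_eq_zero _).1 hv
  have hsx := Submodule.smul_top_le_comap_smul_top J π hfx
  rw [Submodule.mem_comap, hπ] at hsx
  exact (Submodule.Quotient.mk_eq_zero _).2 hsx

theorem exists_mul_finrank_quotient_le [Algebra.FiniteType k R] [Module.Finite R M] {I : Ideal R}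
    (hI : Function.Surjective (algebraMap k (R ⧸ I.radical))) {d : ℕ}
    (hd : Module.supportDim R M + 1 ≤ d) :
    ∃ C : ℕ, ∀ q : ℕ, 1 ≤ q → ∀ Q : Submodule R M, bracketPow I q • ⊤ ≤ Q →
      q * Module.finrank k (M ⧸ Q) ≤ C * q ^ d := by
  obtain _ | d := d
  · have : Subsingleton M := (Module.supportDim_eq_bot_iff_subsingleton R M).1
      (ENat.WithBot.add_one_le_zero_iff _ |>.1 hd)
    exact ⟨0, fun q _ Q _ => by simp [Module.finrank_zero_of_subsingleton]⟩
  · obtain ⟨C, hC⟩ := exists_finrank_quotient_le (k := k) (M := M) hI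
      (ENat.WithBot.add_le_add_one_right_iff.1 hd)
    refine ⟨C, fun q hq Q hQ => (Nat.mul_le_mul_left q (hC q hq Q hQ).2).trans_eq ?_⟩
    ring

theorem supportDim_quotient_range_lsmul_add_one_le [Module.Finite R M] {A : Ideal R}
    (hA : A ≤ Module.annihilator R M) {s : R}
    (hs : Ideal.Quotient.mk A s ∈ nonZeroDivisors (R ⧸ A)) :
    Module.supportDim R (M ⧸ LinearMap.range (LinearMap.lsmul R M s)) + 1 ≤
      ringKrullDim (R ⧸ A) := by
  set N := M ⧸ LinearMap.range (LinearMap.lsmul R M s)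
  have hAN : A ≤ Module.annihilator R N :=
    hA.trans (LinearMap.annihilator_le_of_surjective _ (Submodule.mkQ_surjective _))
  have hsN : s ∈ Module.annihilator R N := Module.mem_annihilator.2 fun m => by
    obtain ⟨m, rfl⟩ := Submodule.mkQ_surjective _ m
    exact (Submodule.Quotient.mk_eq_zero _).2 ⟨m, rfl⟩
  rw [Module.supportDim_eq_ringKrullDim_quotient_annihilator]
  refine ringKrullDim_succ_le_of_surjective (Ideal.Quotient.factor hAN)
    (Ideal.Quotient.factor_surjective hAN) hs ?_
  rwa [Ideal.Quotient.factor_mk, Ideal.Quotient.eq_zero_iff_mem]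

theorem exists_mul_finrank_add_finrank_le_of_isRadical [Algebra.FiniteType k R] [Module.Finite R M]
    [Module.Finite R M'] {I : Ideal R} (hI : Function.Surjective (algebraMap k (R ⧸ I.radical)))
    {f : M' →ₗ[R] M} (hf : Function.Injective f) {d : ℕ} (hd : Module.supportDim R M ≤ d)
    (hrad : (Module.annihilator R M).IsRadical) :
    ∃ C : ℕ, ∀ q : ℕ, 1 ≤ q →
      q * (Module.finrank k (M' ⧸ bracketPow I q • (⊤ : Submodule R M')) +
        Module.finrank k (M ⧸ LinearMap.range f ⊔ bracketPow I q • ⊤)) ≤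
      q * Module.finrank k (M ⧸ bracketPow I q • (⊤ : Submodule R M)) + C * q ^ d := by
  have := Algebra.FiniteType.isNoetherianRing k R
  obtain ⟨s, hs, π, hπ⟩ := exists_smul_retraction hrad f hf
  have hdim := (supportDim_quotient_range_lsmul_add_one_le
    (f.annihilator_le_of_injective hf) hs).trans
      (Module.supportDim_eq_ringKrullDim_quotient_annihilator R M ▸ hd)
  obtain ⟨C, hC⟩ := exists_mul_finrank_quotient_le (k := k) hI hdim
  obtain ⟨_, hM⟩ := exists_finrank_quotient_le (k := k) hI hd
  obtain ⟨_, hM'⟩ := exists_finrank_quotient_le (k := k) hI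
    ((Module.supportDim_le_of_injective f hf).trans hd)
  refine ⟨C, fun q hq => ?_⟩
  have := (hM q hq _ le_rfl).1
  have := (hM' q hq _ le_rfl).1
  have hcoker := hC q hq ((bracketPow I q • (⊤ : Submodule R M')).map (Submodule.mkQ _))
    (map_mkQ_smul_top _ _).ge
  rw [finrank_quotient_quotient_map] at hcoker
  calc q * _ ≤ q * _ := Nat.mul_le_mul_left q
        (finrank_add_finrank_le_of_smul_retraction (k := k) hπ (bracketPow I q))
    _ ≤ _ := by rw [mul_add]; gcongr

end LengthAdditivity

section FrobeniusSubalgebra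

/-- The `k`-subalgebra generated by the `q`-th powers, written `k[R^q]`. It replaces the target of
the Frobenius map, so that no module has to be restricted along a ring endomorphism. -/
def frobeniusSubalgebra (k R : Type*) [Field k] [CommRing R] [Algebra k R] (q : ℕ) :
    Subalgebra k R :=
  Algebra.adjoin k (Set.range fun x : R => x ^ q)

variable {k R : Type*} [Field k] [CommRing R] [Algebra k R]

theorem pow_mem_frobeniusSubalgebra (x : R) (q : ℕ) : x ^ q ∈ frobeniusSubalgebra k R q :=
  Algebra.subset_adjoin ⟨x, rfl⟩

theorem frobeniusSubalgebra_toSubmodule (q : ℕ) :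
    (frobeniusSubalgebra k R q).toSubmodule = Submodule.span k (Set.range fun x : R => x ^ q) := by
  rw [frobeniusSubalgebra, Algebra.adjoin_eq_span]
  congr
  exact congrArg SetLike.coe (MonoidHom.mrange (powMonoidHom q : R →* R)).closure_eq

theorem isIntegral_frobeniusSubalgebra {q : ℕ} (hq : 0 < q) :
    Algebra.IsIntegral (frobeniusSubalgebra k R q) R :=
  ⟨fun x => IsIntegral.of_pow hq
    (isIntegral_algebraMap (x := (⟨x ^ q, pow_mem_frobeniusSubalgebra x q⟩ :
      frobeniusSubalgebra k R q)))⟩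

theorem finite_frobeniusSubalgebra [Algebra.FiniteType k R] {q : ℕ} (hq : 0 < q) :
    Module.Finite (frobeniusSubalgebra k R q) R :=
  have := isIntegral_frobeniusSubalgebra (k := k) (R := R) hq
  have : Algebra.FiniteType (frobeniusSubalgebra k R q) R := .of_restrictScalars_finiteType k _ _
  Algebra.IsIntegral.finite

theorem finiteType_frobeniusSubalgebra [Algebra.FiniteType k R] {q : ℕ} (hq : 0 < q) :
    Algebra.FiniteType k (frobeniusSubalgebra k R q) :=
  have := finite_frobeniusSubalgebra (k := k) (R := R) hq
  ⟨fg_of_fg_of_fg k _ R Algebra.FiniteType.out Module.Finite.fg_top Subtype.val_injective⟩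

end FrobeniusSubalgebra

theorem supportDim_le_of_finite {A B M : Type*} [CommRing A] [CommRing B] [Algebra A B]
    [Module.Finite A B] [AddCommGroup M] [Module A M] [Module B M] [IsScalarTower A B M]
    [Module.Finite B M] : Module.supportDim A M ≤ Module.supportDim B M := by
  have : Module.Finite A M := .trans B M
  rw [Module.supportDim_eq_ringKrullDim_quotient_annihilator,
    Module.supportDim_eq_ringKrullDim_quotient_annihilator, ← Module.comap_annihilator (R := B)]
  have : Algebra.IsIntegral (A ⧸ (Module.annihilator B M).comap (algebraMap A B))
      (B ⧸ Module.annihilator B M) :=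
    ⟨(algebraMap_isIntegral_iff.2 inferInstance : (algebraMap A B).IsIntegral).quotient⟩
  exact ringKrullDim_le_of_isIntegral_of_injective Ideal.algebraMap_quotient_injective

section GeometricallyReduced

open TensorProduct

variable {k S : Type*} [Field k] {p : ℕ} [Fact p.Prime] [CommRing S] [Algebra k S]

theorem map_val_frobeniusSubalgebra_mem_range_iterateFrobenius {K : Type*} [Field K] [Algebra k K]
    [CharP K p] [PerfectRing K p] [CharP (K ⊗[k] S) p] {e : ℕ}
    (t : K ⊗[k] frobeniusSubalgebra k S (p ^ e)) :
    Algebra.TensorProduct.map (.id K K) (frobeniusSubalgebra k S (p ^ e)).val t ∈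
      (iterateFrobenius (K ⊗[k] S) p e).range := by
  have hK (c : K) : algebraMap K (K ⊗[k] S) c ∈ (iterateFrobenius (K ⊗[k] S) p e).range := by
    obtain ⟨b, rfl⟩ := (iterateFrobeniusEquiv K p e).surjective c
    exact ⟨algebraMap K _ b, ((algebraMap K (K ⊗[k] S)).map_iterateFrobenius p b e).symm⟩
  have hS (x : S) (hx : x ∈ frobeniusSubalgebra k S (p ^ e)) :
      (1 : K) ⊗ₜ[k] x ∈ (iterateFrobenius (K ⊗[k] S) p e).range := by
    induction hx using Algebra.adjoin_induction with
    | mem x hx =>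
      obtain ⟨r, rfl⟩ := hx
      exact ⟨1 ⊗ₜ r, by simp [iterateFrobenius_def]⟩
    | algebraMap r =>
      have h := (Algebra.TensorProduct.includeRight : S →ₐ[k] K ⊗[k] S).commutes r
      rw [IsScalarTower.algebraMap_apply k K (K ⊗[k] S)] at h
      exact (congrArg (· ∈ (iterateFrobenius (K ⊗[k] S) p e).range) h).mpr (hK _)
    | add x y _ _ hx hy => simpa [TensorProduct.tmul_add] using add_mem hx hy
    | mul x y _ _ hx hy => simpa using mul_mem hx hy
  induction t using TensorProduct.induction_on with
  | zero => simp
  | add s t hs ht => simpa using add_mem hs ht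
  | tmul c a => simpa using mul_mem (hK c) (hS a a.2)

/- Over a perfect field every element of `K ⊗ k[S^q]` is a `q`-th power in `K ⊗ S`; for large `q`
the `q`-th power of a nilpotent element of the latter vanishes. -/
variable (k S p) in
theorem exists_isGeometricallyReduced_frobeniusSubalgebra [CharP k p] [Algebra.FiniteType k S] :
    ∃ e : ℕ, Algebra.IsGeometricallyReduced k (frobeniusSubalgebra k S (p ^ e)) := by
  let K := AlgebraicClosure k
  have : CharP K p := charP_of_injective_algebraMap (algebraMap k K).injective p
  have : IsNoetherianRing (K ⊗[k] S) := Algebra.FiniteType.isNoetherianRing K _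
  obtain ⟨e, he⟩ := IsNoetherianRing.isNilpotent_nilradical (K ⊗[k] S)
  refine ⟨e, (Algebra.isGeometricallyReduced_field_iff _ _).2 ?_⟩
  let ι : K ⊗[k] frobeniusSubalgebra k S (p ^ e) →ₐ[K] K ⊗[k] S :=
    Algebra.TensorProduct.map (.id K K) (frobeniusSubalgebra k S (p ^ e)).val
  have hι : Function.Injective ι :=
    Module.Flat.lTensor_preserves_injective_linearMap _ Subtype.val_injective
  obtain hT | hT := subsingleton_or_nontrivial (K ⊗[k] S)
  · exact isReduced_of_injective ι hι
  have : CharP (K ⊗[k] S) p :=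
    charP_of_injective_algebraMap (algebraMap K (K ⊗[k] S)).injective p
  refine ⟨fun t ht => hι ?_⟩
  obtain ⟨z, hz⟩ : ι t ∈ (iterateFrobenius (K ⊗[k] S) p e).range :=
    map_val_frobeniusSubalgebra_mem_range_iterateFrobenius t
  rw [iterateFrobenius_def] at hz
  have hz' : z ∈ nilradical (K ⊗[k] S) := (hz ▸ ht.map ι).of_pow
  have hze : z ^ e = 0 := by simpa [he] using Ideal.pow_mem_pow hz' e
  rw [map_zero, ← hz, pow_eq_zero_of_le (Nat.lt_pow_self (Fact.out : p.Prime).one_lt).le hze]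

theorem linearIndependent_pow_of_isGeometricallyReduced [CharP k p] {ι : Type*}
    [Algebra.IsGeometricallyReduced k S] {a : ι → S} (ha : LinearIndependent k a) :
    LinearIndependent k fun i => a i ^ p := by
  let K := AlgebraicClosure k
  have : CharP K p := charP_of_injective_algebraMap (algebraMap k K).injective p
  have ha' : LinearIndependent K fun i => (1 : K) ⊗ₜ[k] a i :=
    Module.Flat.linearIndependent_one_tmul ha
  rw [linearIndependent_iff']
  intro s c hc i hi
  have : Nontrivial (K ⊗[k] S) := ⟨_, _, ha'.ne_zero i⟩
  have : CharP (K ⊗[k] S) p :=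
    charP_of_injective_algebraMap (algebraMap K (K ⊗[k] S)).injective p
  choose b hb using fun i => (frobeniusEquiv K p).surjective (algebraMap k K (c i))
  have hsum : (∑ i ∈ s, b i • (1 : K) ⊗ₜ[k] a i) ^ p = 0 := by
    rw [sum_pow_char p, ← TensorProduct.tmul_zero S (1 : K), ← hc, TensorProduct.tmul_sum]
    refine Finset.sum_congr rfl fun j _ => ?_
    rw [smul_pow, Algebra.TensorProduct.tmul_pow, one_pow, TensorProduct.tmul_smul]
    rw [← algebraMap_smul K (c j), ← hb j, frobeniusEquiv_def]
  have : IsReduced (K ⊗[k] S) := (Algebra.isGeometricallyReduced_field_iff k S).1 inferInstance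
  have hbi := linearIndependent_iff'.1 ha' s b (eq_zero_of_pow_eq_zero hsum) i hi
  simpa [hbi] using (hb i).symm

end GeometricallyReduced

section FrobeniusRestriction

theorem isGeometricallyReduced_quotient_comap_frobeniusSubalgebra {k R : Type*} [Field k]
    [CommRing R] [Algebra k R] (J : Ideal R) (q : ℕ)
    [Algebra.IsGeometricallyReduced k (frobeniusSubalgebra k (R ⧸ J) q)] :
    Algebra.IsGeometricallyReduced k
      (frobeniusSubalgebra k R q ⧸ J.comap (algebraMap (frobeniusSubalgebra k R q) R)) := by
  let ψ := Ideal.quotientMapₐ (I := J.comap (frobeniusSubalgebra k R q).val) J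
    (frobeniusSubalgebra k R q).val le_rfl
  have hψ (x) : ψ x ∈ frobeniusSubalgebra k (R ⧸ J) q := by
    obtain ⟨x, rfl⟩ := Ideal.Quotient.mk_surjective x
    have hmap : (frobeniusSubalgebra k R q).map (Ideal.Quotient.mkₐ k J) ≤
        frobeniusSubalgebra k (R ⧸ J) q := by
      rw [frobeniusSubalgebra, AlgHom.map_adjoin]
      refine Algebra.adjoin_mono ?_
      rintro _ ⟨_, ⟨r, rfl⟩, rfl⟩
      exact ⟨Ideal.Quotient.mk J r, (map_pow (Ideal.Quotient.mk J) r q).symm⟩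
    exact hmap ⟨x, x.2, rfl⟩
  exact .of_injective (ψ.codRestrict _ hψ)
    ((Ideal.quotientMap_injective (f := (frobeniusSubalgebra k R q).val.toRingHom)).codRestrict _)

/-- The `p ^ e`-th power map of `R`, with values in `k[R^(p^e)]`. -/
def toFrobeniusSubalgebra (k R : Type*) [Field k] [CommRing R] [Algebra k R] (p e : ℕ)
    [ExpChar R p] : R →+* frobeniusSubalgebra k R (p ^ e) :=
  (iterateFrobenius R p e).codRestrict _ fun x => pow_mem_frobeniusSubalgebra x _

variable {k R M : Type*} [Field k] [CommRing R] [Algebra k R] [AddCommGroup M] [Module R M]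
  {p : ℕ} [ExpChar R p]

@[simp]
theorem coe_toFrobeniusSubalgebra (e : ℕ) (x : R) :
    (toFrobeniusSubalgebra k R p e x : R) = x ^ p ^ e :=
  rfl

theorem surjective_algebraMap_quotient_radical_map {I : Ideal R}
    (hI : Function.Surjective (algebraMap k (R ⧸ I.radical))) (e : ℕ) :
    Function.Surjective (algebraMap k
      (frobeniusSubalgebra k R (p ^ e) ⧸ (I.map (toFrobeniusSubalgebra k R p e)).radical)) := by
  set Q := frobeniusSubalgebra k R (p ^ e) ⧸ (I.map (toFrobeniusSubalgebra k R p e)).radical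
  rintro ⟨x, hx⟩
  change Ideal.Quotient.mk _ _ ∈ (algebraMap k Q).range
  induction hx using Algebra.adjoin_induction with
  | mem x hx =>
    obtain ⟨r, rfl⟩ := hx
    obtain ⟨c, hc⟩ := hI (Ideal.Quotient.mk _ r)
    have hmem := Ideal.map_radical_le _ (Ideal.mem_map_of_mem (toFrobeniusSubalgebra k R p e)
      (Ideal.Quotient.eq.1 hc))
    rw [map_sub, ← Ideal.Quotient.eq] at hmem
    exact ⟨c ^ p ^ e, (congrArg (Ideal.Quotient.mk _) (Subtype.ext (map_pow _ c _))).trans hmem⟩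
  | algebraMap r => exact ⟨r, rfl⟩
  | add x y hx hy hx' hy' => exact add_mem hx' hy'
  | mul x y hx hy hx' hy' => exact mul_mem hx' hy'

theorem bracketPow_map_toFrobeniusSubalgebra_smul_top (I : Ideal R) (e n : ℕ) :
    bracketPow (I.map (toFrobeniusSubalgebra k R p e)) (p ^ n) • ⊤ =
      (bracketPow I (p ^ (e + n)) • (⊤ : Submodule R M)).restrictScalars
        (frobeniusSubalgebra k R (p ^ e)) := by
  have : ExpChar (frobeniusSubalgebra k R (p ^ e)) p :=
    (algebraMap (frobeniusSubalgebra k R (p ^ e)) R).expChar Subtype.val_injective p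
  have hcomp : (algebraMap (frobeniusSubalgebra k R (p ^ e)) R).comp
      ((iterateFrobenius _ p n).comp (toFrobeniusSubalgebra k R p e)) =
        iterateFrobenius R p (e + n) := by
    ext x
    exact (pow_mul x _ _).symm.trans (by rw [← pow_add, iterateFrobenius_def])
  have hmap : (bracketPow (I.map (toFrobeniusSubalgebra k R p e)) (p ^ n)).map
      (algebraMap (frobeniusSubalgebra k R (p ^ e)) R) = bracketPow I (p ^ (e + n)) := by
    change ((I.map (toFrobeniusSubalgebra k R p e)).map (iterateFrobenius _ p n)).map _ =
      I.map (iterateFrobenius R p (e + n))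
    rw [Ideal.map_map, Ideal.map_map, ← hcomp]
    rfl
  rw [← hmap, Ideal.smul_restrictScalars, Submodule.restrictScalars_top]

end FrobeniusRestriction

theorem finrank_quotient_restrictScalars {k R M : Type*} [Field k] [CommRing R] [Algebra k R]
    [AddCommGroup M] [Module R M] [Module k M] [IsScalarTower k R M] (A : Subalgebra k R)
    (N : Submodule R M) : Module.finrank k (M ⧸ N.restrictScalars A) = Module.finrank k (M ⧸ N) :=
  ((Submodule.Quotient.restrictScalarsEquiv A N).restrictScalars k).finrank_eq

theorem exists_isRadical_annihilator_frobeniusSubalgebra (k R M : Type*) [Field k] [CommRing R]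
    [Algebra k R] [Algebra.FiniteType k R] (p : ℕ) [Fact p.Prime] [CharP k p] [AddCommGroup M]
    [Module R M] :
    ∃ e : ℕ, (Module.annihilator (frobeniusSubalgebra k R (p ^ e)) M).IsRadical := by
  obtain ⟨e, he⟩ := exists_isGeometricallyReduced_frobeniusSubalgebra k
    (R ⧸ Module.annihilator R M) p
  refine ⟨e, ?_⟩
  rw [← Module.comap_annihilator (R := R), Ideal.isRadical_iff_quotient_reduced]
  have := isGeometricallyReduced_quotient_comap_frobeniusSubalgebra (k := k)
    (Module.annihilator R M) (p ^ e)
  exact Algebra.isReduced_of_isGeometricallyReduced k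

section FrobeniusLengthAdditivity

variable {k R M' M : Type*} [Field k] [CommRing R] [Algebra k R] [Algebra.FiniteType k R]
  {p : ℕ} [Fact p.Prime] [CharP R p] {I : Ideal R}
  [AddCommGroup M'] [Module R M'] [Module k M'] [IsScalarTower k R M'] [Module.Finite R M']
  [AddCommGroup M] [Module R M] [Module k M] [IsScalarTower k R M] [Module.Finite R M]

theorem exists_forall_add_pow_mul_finrank_add_finrank_le
    (hI : Function.Surjective (algebraMap k (R ⧸ I.radical)))
    {f : M' →ₗ[R] M} (hf : Function.Injective f) {d : ℕ} (hd : Module.supportDim R M ≤ d) :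
    ∃ e C : ℕ, ∀ m : ℕ,
      p ^ m * (Module.finrank k (M' ⧸ bracketPow I (p ^ (e + m)) • (⊤ : Submodule R M')) +
        Module.finrank k (M ⧸ LinearMap.range f ⊔ bracketPow I (p ^ (e + m)) • ⊤)) ≤
      p ^ m * Module.finrank k (M ⧸ bracketPow I (p ^ (e + m)) • (⊤ : Submodule R M)) +
        C * (p ^ m) ^ d := by
  have : Nontrivial R := CharP.nontrivial_of_char_ne_one (Fact.out : p.Prime).ne_one
  have : CharP k p := (algebraMap k R).charP (algebraMap k R).injective p
  have hp (n : ℕ) : 0 < p ^ n := pow_pos (Fact.out : p.Prime).pos n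
  obtain ⟨e, hrad⟩ := exists_isRadical_annihilator_frobeniusSubalgebra k R M p
  let A := frobeniusSubalgebra k R (p ^ e)
  have : Module.Finite A R := finite_frobeniusSubalgebra (hp e)
  have : Module.Finite A M := .trans R M
  have : Module.Finite A M' := .trans R M'
  have : Algebra.FiniteType k A := finiteType_frobeniusSubalgebra (hp e)
  obtain ⟨C, hC⟩ := exists_mul_finrank_add_finrank_le_of_isRadical (k := k)
    (surjective_algebraMap_quotient_radical_map (p := p) hI e) (f := f.restrictScalars A) hf
    (supportDim_le_of_finite.trans hd) hrad
  refine ⟨e, C, fun m => ?_⟩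
  have h := hC (p ^ m) (hp m)
  rwa [bracketPow_map_toFrobeniusSubalgebra_smul_top (M := M'),
    bracketPow_map_toFrobeniusSubalgebra_smul_top (M := M), LinearMap.range_restrictScalars,
    ← Submodule.restrictScalars_sup, finrank_quotient_restrictScalars,
    finrank_quotient_restrictScalars, finrank_quotient_restrictScalars] at h

theorem exists_pow_mul_finrank_add_finrank_le
    (hI : Function.Surjective (algebraMap k (R ⧸ I.radical)))
    {f : M' →ₗ[R] M} (hf : Function.Injective f) {d : ℕ} (hd : Module.supportDim R M ≤ d) :
    ∃ C : ℕ, ∀ n : ℕ,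
      p ^ n * (Module.finrank k (M' ⧸ bracketPow I (p ^ n) • (⊤ : Submodule R M')) +
        Module.finrank k (M ⧸ LinearMap.range f ⊔ bracketPow I (p ^ n) • ⊤)) ≤
      p ^ n * Module.finrank k (M ⧸ bracketPow I (p ^ n) • (⊤ : Submodule R M)) +
        C * (p ^ n) ^ d := by
  have hp : p.Prime := Fact.out
  obtain ⟨e, C, hC⟩ := exists_forall_add_pow_mul_finrank_add_finrank_le (k := k) (p := p) hI hf hd
  obtain ⟨C', hC'⟩ := exists_finrank_quotient_le (k := k) hI
    ((Module.supportDim_le_of_injective f hf).trans hd)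
  obtain ⟨C'', hC''⟩ := exists_finrank_quotient_le (k := k) hI hd
  refine ⟨p ^ e * (C + C' + C''), fun n => ?_⟩
  obtain ⟨m, rfl⟩ | hn := (le_total e n).imp_left Nat.exists_eq_add_of_le
  · calc p ^ (e + m) * _ = p ^ e * (p ^ m * _) := by rw [← mul_assoc, ← pow_add]
      _ ≤ p ^ e * (p ^ m * _ + C * (p ^ m) ^ d) := Nat.mul_le_mul_left _ (hC m)
      _ = p ^ (e + m) * _ + p ^ e * C * (p ^ m) ^ d := by
        rw [mul_add, ← mul_assoc, ← pow_add, mul_assoc]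
      _ ≤ _ := by
        gcongr
        · lia
        · exact hp.one_le
        · lia
  · have h' := (hC' (p ^ n) (Nat.pow_pos hp.pos) _ le_rfl).2
    have h'' := (hC'' (p ^ n) (Nat.pow_pos hp.pos)
      (LinearMap.range f ⊔ bracketPow I (p ^ n) • ⊤) le_sup_right).2
    calc p ^ n * _ ≤ p ^ e * (C' * (p ^ n) ^ d + C'' * (p ^ n) ^ d) := by
          gcongr; exact hp.one_le
      _ ≤ p ^ e * (C + C' + C'') * (p ^ n) ^ d := by
          rw [mul_assoc, ← add_mul]; gcongr; lia
      _ ≤ _ := Nat.le_add_left _ _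

theorem mapQ_comap_injective {R M' M : Type*} [CommRing R] [AddCommGroup M']
    [Module R M'] [AddCommGroup M] [Module R M] (f : M' →ₗ[R] M) (N : Submodule R M) :
    Function.Injective ((N.comap f).mapQ N f le_rfl) := by
  rw [← LinearMap.ker_eq_bot, Submodule.ker_mapQ]
  exact Submodule.mkQ_map_self _

theorem exists_pow_mul_finrank_add_finrank_sup_le
    (hI : Function.Surjective (algebraMap k (R ⧸ I.radical))) (f : M' →ₗ[R] M)
    {N : Submodule R M} {d : ℕ} (hd : Module.supportDim R (M ⧸ N) ≤ d) :
    ∃ C : ℕ, ∀ n : ℕ,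
      p ^ n * (Module.finrank k (M' ⧸ N.comap f ⊔ bracketPow I (p ^ n) • ⊤) +
        Module.finrank k (M ⧸ (N ⊔ LinearMap.range f) ⊔ bracketPow I (p ^ n) • ⊤)) ≤
      p ^ n * Module.finrank k (M ⧸ N ⊔ bracketPow I (p ^ n) • ⊤) + C * (p ^ n) ^ d := by
  obtain ⟨C, hC⟩ := exists_pow_mul_finrank_add_finrank_le (k := k) (p := p) hI
    (mapQ_comap_injective f N) hd
  refine ⟨C, fun n => ?_⟩
  have h := hC n
  rw [← map_mkQ_smul_top, ← map_mkQ_smul_top, Submodule.range_mapQ, ← Submodule.map_sup,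
    finrank_quotient_quotient_map, finrank_quotient_quotient_map, finrank_quotient_quotient_map,
    ← sup_assoc] at h
  exact h

end FrobeniusLengthAdditivity

section HomogeneousSubmodules

open DirectSum

section DegreeMap

variable {k M' M F : Type*} [Field k] [AddCommGroup M'] [Module k M'] [AddCommGroup M] [Module k M]
  {ℳ' : ℤ → Submodule k M'} [Decomposition ℳ'] {ℳ : ℤ → Submodule k M} [Decomposition ℳ]
  [FunLike F M' M] [AddMonoidHomClass F M' M] (f : F)

theorem coe_decompose_map_of_injective {δ : ℤ → ℤ} (hδ : Function.Injective δ)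
    (hf : ∀ j, ∀ x ∈ ℳ' j, f x ∈ ℳ (δ j)) (x : M') (j : ℤ) :
    (decompose ℳ (f x) (δ j) : M) = f (decompose ℳ' x j) := by
  induction x using Decomposition.inductionOn ℳ' with
  | zero => simp
  | add x y hx hy => simp [hx, hy]
  | @homogeneous i x =>
    obtain rfl | hij := eq_or_ne i j
    · rw [decompose_of_mem_same ℳ (hf i x x.2), decompose_of_mem_same ℳ' x.2]
    · rw [decompose_of_mem_ne ℳ (hf i x x.2) (hδ.ne hij), decompose_of_mem_ne ℳ' x.2 hij,
        map_zero]

theorem decompose_map_eq_zero {δ : ℤ → ℤ} (hf : ∀ j, ∀ x ∈ ℳ' j, f x ∈ ℳ (δ j)) {i : ℤ}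
    (hi : i ∉ Set.range δ) (x : M') : (decompose ℳ (f x) i : M) = 0 := by
  induction x using Decomposition.inductionOn ℳ' with
  | zero => simp
  | add x y hx hy => simp [hx, hy]
  | @homogeneous j x => exact decompose_of_mem_ne ℳ (hf j x x.2) fun h => hi ⟨j, h⟩

theorem coe_decompose_map {b : ℤ} (hf : ∀ j, ∀ x ∈ ℳ' j, f x ∈ ℳ (j + b)) (x : M') (j : ℤ) :
    (decompose ℳ (f x) (j + b) : M) = f (decompose ℳ' x j) :=
  coe_decompose_map_of_injective f (add_left_injective b) hf x j

end DegreeMap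

variable {k R M' M : Type*} [Field k] [CommRing R] [AddCommGroup M'] [Module R M'] [Module k M']
  [AddCommGroup M] [Module R M] [Module k M]
  {ℳ' : ℤ → Submodule k M'} [Decomposition ℳ'] {ℳ : ℤ → Submodule k M} [Decomposition ℳ]

theorem isHomogeneous_sup {N Q : Submodule R M} (hN : N.IsHomogeneous ℳ)
    (hQ : Q.IsHomogeneous ℳ) : (N ⊔ Q).IsHomogeneous ℳ := by
  intro j m hm
  obtain ⟨x, hx, y, hy, rfl⟩ := Submodule.mem_sup.mp hm
  rw [decompose_add]
  exact Submodule.add_mem_sup (hN j hx) (hQ j hy)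

theorem isHomogeneous_comap {f : M' →ₗ[R] M} {b : ℤ} (hf : ∀ j, ∀ x ∈ ℳ' j, f x ∈ ℳ (j + b))
    {N : Submodule R M} (hN : N.IsHomogeneous ℳ) : (N.comap f).IsHomogeneous ℳ' := by
  intro j x hx
  change f _ ∈ N
  rw [← coe_decompose_map f hf]
  exact hN _ hx

theorem isHomogeneous_range {f : M' →ₗ[R] M} {b : ℤ} (hf : ∀ j, ∀ x ∈ ℳ' j, f x ∈ ℳ (j + b)) :
    (LinearMap.range f).IsHomogeneous ℳ := by
  rintro j _ ⟨x, rfl⟩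
  rw [← sub_add_cancel j b, coe_decompose_map f hf]
  exact LinearMap.mem_range_self f _

variable [Algebra k R] {𝒜 : ℤ → Submodule k R}

theorem smul_mem_of_mem {M : Type*} [AddCommGroup M] [Module R M] [Module k M]
    {ℳ : ℤ → Submodule k M} [SetLike.GradedSMul 𝒜 ℳ] {a j : ℤ} {r : R} {m : M} (hr : r ∈ 𝒜 a)
    (hm : m ∈ ℳ j) : r • m ∈ ℳ (j + a) :=
  add_comm a j ▸ SetLike.GradedSMul.smul_mem hr hm

theorem coe_decompose_smul_of_mem [SetLike.GradedSMul 𝒜 ℳ] {a : ℤ} {r : R} (hr : r ∈ 𝒜 a)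
    (m : M) (j : ℤ) :
    (decompose ℳ (r • m) (j + a) : M) = r • (decompose ℳ m j : M) :=
  coe_decompose_map (LinearMap.lsmul R M r) (fun _ _ hx => smul_mem_of_mem hr hx) m j

variable [GradedAlgebra 𝒜]

open scoped Classical in
theorem coe_decompose_smul [SetLike.GradedSMul 𝒜 ℳ] (r : R) (m : M) (j : ℤ) :
    (decompose ℳ (r • m) j : M) =
      ∑ a ∈ (decompose 𝒜 r).support, (decompose 𝒜 r a : R) • (decompose ℳ m (j - a) : M) := by
  conv_lhs => rw [← sum_support_decompose 𝒜 r, Finset.sum_smul, decompose_sum]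
  rw [DFinsupp.finsetSum_apply, AddSubmonoidClass.coe_finsetSum]
  refine Finset.sum_congr rfl fun a _ => ?_
  rw [← coe_decompose_smul_of_mem (decompose 𝒜 r a).2, sub_add_cancel]

theorem isHomogeneous_smul_top [SetLike.GradedSMul 𝒜 ℳ] {J : Ideal R} (hJ : J.IsHomogeneous 𝒜) :
    (J • (⊤ : Submodule R M)).IsHomogeneous ℳ := by
  intro j m hm
  induction hm using Submodule.smul_induction_on' with
  | smul r hr m _ =>
    rw [coe_decompose_smul (𝒜 := 𝒜)]
    exact Submodule.sum_mem _ fun a _ => Submodule.smul_mem_smul (hJ a hr) trivial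
  | add x _ y _ hx hy =>
    rw [decompose_add]
    exact Submodule.add_mem _ hx hy

theorem isHomogeneous_map {S : Type*} [CommRing S] [Algebra k S] {ℬ : ℤ → Submodule k S}
    [GradedAlgebra ℬ] {φ : R →+* S}
    (hφ : ∀ x, SetLike.IsHomogeneousElem 𝒜 x → SetLike.IsHomogeneousElem ℬ (φ x)) {I : Ideal R}
    (hI : I.IsHomogeneous 𝒜) : (I.map φ).IsHomogeneous ℬ := by
  obtain ⟨s, rfl⟩ := (Ideal.IsHomogeneous.iff_exists 𝒜 I).mp hI
  rw [Ideal.map_span]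
  refine Ideal.homogeneous_span ℬ _ ?_
  rintro _ ⟨_, ⟨x, -, rfl⟩, rfl⟩
  exact hφ x x.2

theorem isHomogeneous_bracketPow {p : ℕ} [ExpChar R p] {I : Ideal R} (hI : I.IsHomogeneous 𝒜)
    (n : ℕ) : (bracketPow I (p ^ n)).IsHomogeneous 𝒜 := by
  change (I.map (iterateFrobenius R p n)).IsHomogeneous 𝒜
  refine isHomogeneous_map (fun x hx => ?_) hI
  exact (SetLike.homogeneousSubmonoid 𝒜).pow_mem hx _

end HomogeneousSubmodules

section PieceDimensions

open DirectSum

variable {k R M' M : Type*} [Field k] [CommRing R] [Algebra k R]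
  [AddCommGroup M'] [Module R M'] [Module k M'] [IsScalarTower k R M']
  [AddCommGroup M] [Module R M] [Module k M] [IsScalarTower k R M]
  {ℳ' : ℤ → Submodule k M'} {ℳ : ℤ → Submodule k M}

theorem quotPieceDim_eq_zero {Q : Submodule R M} {j : ℤ} (h : ∀ x ∈ ℳ j, x ∈ Q) :
    quotPieceDim k ℳ Q j = 0 := by
  have hbot : (ℳ j).map (Q.mkQ.restrictScalars k) = ⊥ :=
    le_bot_iff.mp <| Submodule.map_le_iff_le_comap.mpr fun x hx =>
      (Submodule.Quotient.mk_eq_zero Q).mpr (h x hx)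
  rw [quotPieceDim, hbot, finrank_bot]

theorem iSupIndep_of_projections {V ι : Type*} [AddCommGroup V] [Module k V]
    {W : ι → Submodule k V} (π : ι → V →ₗ[k] V) (hπ : ∀ i, ∀ x ∈ W i, π i x = x)
    (hπ_ne : ∀ i j, i ≠ j → ∀ x ∈ W i, π j x = 0) : iSupIndep W := by
  intro j
  have hker : (⨆ i, ⨆ (_ : i ≠ j), W i) ≤ LinearMap.ker (π j) :=
    iSup₂_le fun i hi x hx => hπ_ne i j hi x hx
  rw [Submodule.disjoint_def]
  exact fun x hx h => (hπ j x hx).symm.trans (hker h)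

variable [Decomposition ℳ]

/-- The `j`-th homogeneous component as a `k`-linear endomorphism of a graded module. -/
def homogeneousComponent (ℳ : ℤ → Submodule k M) [Decomposition ℳ] (j : ℤ) : M →ₗ[k] M :=
  (ℳ j).subtype ∘ₗ component k ℤ (fun j => ℳ j) j ∘ₗ (decomposeLinearEquiv ℳ).toLinearMap

theorem isInternal_map_mkQ {Q : Submodule R M} (hQ : Q.IsHomogeneous ℳ) :
    DirectSum.IsInternal fun j => (ℳ j).map (Q.mkQ.restrictScalars k) := by
  let π (j : ℤ) : M ⧸ Q →ₗ[k] M ⧸ Q := (Q.restrictScalars k).mapQ (Q.restrictScalars k)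
    (homogeneousComponent ℳ j) fun m hm => hQ j hm
  have hπ (j m) : π j (Q.mkQ m) = Q.mkQ (decompose ℳ m j) := rfl
  refine isInternal_submodule_of_iSupIndep_of_iSup_eq_top
    (iSupIndep_of_projections π ?_ ?_) ?_
  · rintro j _ ⟨m, hm, rfl⟩
    exact (hπ j m).trans (congrArg Q.mkQ (decompose_of_mem_same ℳ hm))
  · rintro i j hij _ ⟨m, hm, rfl⟩
    exact (hπ j m).trans (by rw [decompose_of_mem_ne ℳ hm hij, map_zero])
  · rw [← Submodule.map_iSup, (Decomposition.isInternal ℳ).submodule_iSup_eq_top,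
      Submodule.map_top, LinearMap.range_eq_top]
    exact Q.mkQ_surjective

theorem hasSum_finrank_of_isInternal {V ι : Type*} [DecidableEq ι] [AddCommGroup V] [Module k V]
    [Module.Finite k V] {W : ι → Submodule k V} (hW : DirectSum.IsInternal W) :
    HasSum (fun i => (Module.finrank k (W i) : ℝ)) (Module.finrank k V) := by
  have hfin : {i | W i ≠ ⊥}.Finite := WellFoundedGT.finite_ne_bot_of_iSupIndep
    hW.submodule_iSupIndep
  have : Fintype {i // W i ≠ ⊥} := hfin.fintype
  have hsum : Module.finrank k V = ∑ i : {i // W i ≠ ⊥}, Module.finrank k (W i) := by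
    rw [← Module.finrank_pi_fintype, ← (linearEquivFunOnFintype k _ _).finrank_eq]
    exact (LinearEquiv.ofBijective (coeLinearMap fun i : {i // W i ≠ ⊥} => W i)
      (isInternal_ne_bot_iff.mpr hW)).finrank_eq.symm
  rw [hsum, Nat.cast_sum]
  refine (hasSum_subtype_iff_of_support_subset (s := {i | W i ≠ ⊥}) fun i hi => ?_).mp
    (hasSum_fintype fun i : {i // W i ≠ ⊥} => (Module.finrank k (W i) : ℝ))
  exact fun hbot => hi (by simp [hbot])

theorem hasSum_quotPieceDim {Q : Submodule R M} (hQ : Q.IsHomogeneous ℳ)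
    [Module.Finite k (M ⧸ Q)] :
    HasSum (fun j => (quotPieceDim k ℳ Q j : ℝ)) (Module.finrank k (M ⧸ Q)) :=
  hasSum_finrank_of_isInternal (isInternal_map_mkQ hQ)

theorem finrank_map_add_finrank_inf_ker {V U : Type*} [AddCommGroup V] [Module k V]
    [AddCommGroup U] [Module k U] (W : Submodule k V) [Module.Finite k W] (π : V →ₗ[k] U) :
    Module.finrank k (W.map π) + Module.finrank k (W ⊓ LinearMap.ker π : Submodule k V) =
      Module.finrank k W := by
  rw [← Submodule.map_comap_subtype, Submodule.finrank_map_subtype_eq, ← LinearMap.ker_domRestrict,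
    ← LinearMap.range_domRestrict, LinearMap.finrank_range_add_finrank_ker]

theorem quotPieceDim_le {f : M' →ₗ[R] M} {Q' : Submodule R M'} {Q : Submodule R M}
    (hQ : Q.IsHomogeneous ℳ) [Decomposition ℳ'] (hQQ : Q' ≤ Q.comap f) {b : ℤ}
    (hf : ∀ j, ∀ x ∈ ℳ' j, f x ∈ ℳ (j + b)) (j : ℤ)
    [Module.Finite k (M' ⧸ Q')] [Module.Finite k (M ⧸ Q)] :
    quotPieceDim k ℳ Q (j + b) ≤
      quotPieceDim k ℳ' Q' j + quotPieceDim k ℳ (Q ⊔ LinearMap.range f) (j + b) := by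
  let W := (ℳ (j + b)).map (Q.mkQ.restrictScalars k)
  let π := (Submodule.factor (le_sup_left : Q ≤ Q ⊔ LinearMap.range f)).restrictScalars k
  have hmap : W.map π = (ℳ (j + b)).map ((Q ⊔ LinearMap.range f).mkQ.restrictScalars k) := by
    rw [← Submodule.map_comp]
    rfl
  have hker : W ⊓ LinearMap.ker π ≤
      ((ℳ' j).map (Q'.mkQ.restrictScalars k)).map ((Q'.mapQ Q f hQQ).restrictScalars k) := by
    rintro _ ⟨⟨m, hm, rfl⟩, hπ⟩
    have hm' : m ∈ Q ⊔ LinearMap.range f := (Submodule.Quotient.mk_eq_zero _).mp hπ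
    obtain ⟨u, hu, _, ⟨x, rfl⟩, hux⟩ := Submodule.mem_sup.mp hm'
    refine ⟨Q'.mkQ (decompose ℳ' x j), ⟨_, (decompose ℳ' x j).2, rfl⟩, ?_⟩
    refine ((Submodule.Quotient.eq Q).mpr ?_).symm
    change m - f _ ∈ Q
    rw [← coe_decompose_map f hf, ← decompose_of_mem_same ℳ hm, ← hux, decompose_add]
    simpa using hQ _ hu
  calc Module.finrank k W = Module.finrank k (W.map π) + Module.finrank k (W ⊓ LinearMap.ker π :
        Submodule k (M ⧸ Q)) := (finrank_map_add_finrank_inf_ker W π).symm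
    _ ≤ Module.finrank k (W.map π) + quotPieceDim k ℳ' Q' j :=
      Nat.add_le_add_left ((Submodule.finrank_mono hker).trans (Submodule.finrank_map_le _ _)) _
    _ = quotPieceDim k ℳ' Q' j + quotPieceDim k ℳ (Q ⊔ LinearMap.range f) (j + b) := by
      rw [hmap, add_comm]; rfl

end PieceDimensions

section DegreeBound

open DirectSum

variable {k R M : Type*} [Field k] [CommRing R] [AddCommGroup M] [Module R M] [Module k M]
  {ℳ : ℤ → Submodule k M}

/-- The span of the homogeneous elements of degree at most `B` in absolute value. -/
def boundedDegree (ℳ : ℤ → Submodule k M) (B : ℕ) : Submodule k M :=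
  ⨆ j : {j : ℤ // j.natAbs ≤ B}, ℳ j

theorem mem_boundedDegree {m : M} {j : ℤ} {B : ℕ} (hm : m ∈ ℳ j) (hj : j.natAbs ≤ B) :
    m ∈ boundedDegree ℳ B :=
  Submodule.mem_iSup_of_mem ⟨j, hj⟩ hm

theorem boundedDegree_mono (ℳ : ℤ → Submodule k M) : Monotone (boundedDegree ℳ) :=
  fun _ _ hB => iSup_le fun j => le_iSup_of_le ⟨j, j.2.trans hB⟩ le_rfl

theorem smul_mem_boundedDegree [Algebra k R] [IsScalarTower k R M] {𝒜 : ℤ → Submodule k R}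
    [SetLike.GradedSMul 𝒜 ℳ] {a : ℤ} {r : R} (hr : r ∈ 𝒜 a) {D B : ℕ}
    (ha : a.natAbs ≤ D) {m : M} (hm : m ∈ boundedDegree ℳ B) :
    r • m ∈ boundedDegree ℳ (B + D) := by
  have hle : boundedDegree ℳ B ≤ (boundedDegree ℳ (B + D)).comap (Algebra.lsmul k k M r) :=
    iSup_le fun i x hx => mem_boundedDegree (smul_mem_of_mem hr hx)
      ((Int.natAbs_add_le _ _).trans (add_le_add i.2 ha))
  exact hle hm

variable [Decomposition ℳ]

theorem decompose_eq_zero_of_mem_boundedDegree {m : M} {j : ℤ} {B : ℕ}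
    (hm : m ∈ boundedDegree ℳ B) (hj : B < j.natAbs) : (decompose ℳ m j : M) = 0 := by
  have hle : boundedDegree ℳ B ≤ LinearMap.ker (homogeneousComponent ℳ j) :=
    iSup_le fun i x hx => decompose_of_mem_ne ℳ hx fun hij => hj.not_ge (hij ▸ i.2)
  exact hle hm

variable (R ℳ) in
theorem exists_homogeneous_span_eq_top [Module.Finite R M] :
    ∃ (τ : Type) (_ : Fintype τ) (g : τ → M) (b : τ → ℤ),
      Submodule.span R (Set.range g) = ⊤ ∧ ∀ i, g i ∈ ℳ (b i) := by
  classical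
  obtain ⟨n, g, hg⟩ := Module.Finite.exists_fin (R := R) (M := M)
  refine ⟨Σ i : Fin n, (decompose ℳ (g i)).support, inferInstance,
    fun i => decompose ℳ (g i.1) i.2, fun i => i.2, ?_, fun i => (decompose ℳ (g i.1) i.2).2⟩
  rw [eq_top_iff, ← hg, Submodule.span_le]
  rintro _ ⟨i, rfl⟩
  rw [← sum_support_decompose ℳ (g i)]
  exact Submodule.sum_mem _ fun a ha => Submodule.subset_span ⟨⟨i, a, ha⟩, rfl⟩

variable [Algebra k R] {𝒜 : ℤ → Submodule k R} [GradedAlgebra 𝒜]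

theorem exists_homogeneous_adjoin_eq_top [Algebra.FiniteType k R] {I : Ideal R}
    (hI : Function.Surjective (algebraMap k (R ⧸ I.radical))) (hIh : I.IsHomogeneous 𝒜) :
    ∃ (ι : Type) (_ : Fintype ι) (x : ι → R) (a : ι → ℤ),
      Algebra.adjoin k (Set.range x) = ⊤ ∧ ∀ i, x i ∈ I.radical ∧ x i ∈ 𝒜 (a i) := by
  classical
  obtain ⟨n, x, hx, hxI⟩ := exists_adjoin_eq_top_of_surjective hI
  refine ⟨Σ i : Fin n, (decompose 𝒜 (x i)).support, inferInstance,
    fun i => decompose 𝒜 (x i.1) i.2, fun i => i.2, ?_,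
    fun i => ⟨hIh.radical _ (hxI i.1), (decompose 𝒜 (x i.1) i.2).2⟩⟩
  rw [eq_top_iff, ← hx, Algebra.adjoin_le_iff]
  rintro _ ⟨i, rfl⟩
  rw [← sum_support_decompose 𝒜 (x i)]
  exact Subalgebra.sum_mem _ fun a ha => Algebra.subset_adjoin ⟨⟨i, a, ha⟩, rfl⟩

theorem exists_mem_of_lt_natAbs [Algebra.FiniteType k R] [IsScalarTower k R M] [Module.Finite R M]
    [SetLike.GradedSMul 𝒜 ℳ] {I : Ideal R}
    (hI : Function.Surjective (algebraMap k (R ⧸ I.radical))) (hIh : I.IsHomogeneous 𝒜) :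
    ∃ L : ℕ, ∀ q, 1 ≤ q → ∀ Q : Submodule R M, bracketPow I q • ⊤ ≤ Q → Q.IsHomogeneous ℳ →
      ∀ j : ℤ, L * q < j.natAbs → ∀ m ∈ ℳ j, m ∈ Q := by
  obtain ⟨ι, _, x, a, hx, hxI⟩ := exists_homogeneous_adjoin_eq_top hI hIh
  obtain ⟨τ, _, g, b, hg, hgb⟩ := exists_homogeneous_span_eq_top R ℳ
  choose c hc using fun i => (hxI i).1
  obtain ⟨C, hC⟩ : ∃ C, ∀ i, c i ≤ C := ⟨_, fun i => Finset.le_sup (Finset.mem_univ i)⟩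
  obtain ⟨D, hD⟩ : ∃ D, ∀ i, (a i).natAbs ≤ D :=
    ⟨_, fun i => Finset.le_sup (f := fun i => (a i).natAbs) (Finset.mem_univ i)⟩
  obtain ⟨B, hB⟩ : ∃ B, ∀ i, (b i).natAbs ≤ B :=
    ⟨_, fun i => Finset.le_sup (f := fun i => (b i).natAbs) (Finset.mem_univ i)⟩
  refine ⟨B + D * (Fintype.card ι * C), fun q hq Q hQ hQh j hj m hm => ?_⟩
  have htop : boundedDegree ℳ (B + D * (Fintype.card ι * (C * q))) ⊔ Q.restrictScalars k = ⊤ := by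
    refine sup_eq_top_of_pow_smul_mem (W := fun δ => boundedDegree ℳ (B + δ)) hx hg
      (fun _ _ h => boundedDegree_mono ℳ (by lia)) (fun i => mem_boundedDegree (hgb i) (hB i))
      (fun i δ m hm => ?_) (fun i m => hQ <| Submodule.smul_mem_smul ?_ trivial)
    · rw [← add_assoc]
      exact smul_mem_boundedDegree (hxI i).2 (hD i) hm
    · exact (bracketPow I q).pow_mem_of_pow_mem (pow_mem_bracketPow (hc i) q)
        (Nat.mul_le_mul_right q (hC i))
  obtain ⟨w, hw, u, hu, rfl⟩ := Submodule.mem_sup.mp (htop ▸ Submodule.mem_top (x := m))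
  rw [← decompose_of_mem_same ℳ hm, decompose_add, DirectSum.add_apply, Submodule.coe_add,
    decompose_eq_zero_of_mem_boundedDegree hw (by nlinarith), zero_add]
  exact hQh j hu

end DegreeBound

section HilbertSeries

open DirectSum

variable {k R M' M : Type*} [Field k] [CommRing R] [Algebra k R]
  [AddCommGroup M'] [Module R M'] [Module k M'] [IsScalarTower k R M']
  [AddCommGroup M] [Module R M] [Module k M] [IsScalarTower k R M]
  {ℳ' : ℤ → Submodule k M'} {ℳ : ℤ → Submodule k M}

/-- The Hilbert series `∑ⱼ λ_k((M/Q)ⱼ) e^{-iwj}` of a graded quotient `M/Q`, as a function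
of `w`. -/
def hilbertSeries (k : Type*) {R M : Type*} [Field k] [CommRing R] [Algebra k R]
    [AddCommGroup M] [Module R M] [Module k M] [IsScalarTower k R M]
    (ℳ : ℤ → Submodule k M) (Q : Submodule R M) (w : ℂ) : ℂ :=
  ∑' j : ℤ, (quotPieceDim k ℳ Q j : ℂ) * exp (-I * w * j)

theorem norm_le_exp_mul_of_hasSum {a : ℤ → ℝ} (ha : ∀ j, 0 ≤ a j) {A : ℝ} (hA : HasSum a A)
    {B : ℕ} (hB : ∀ j : ℤ, B < j.natAbs → a j = 0) {w S : ℂ}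
    (hS : HasSum (fun j : ℤ => (a j : ℂ) * exp (-I * w * j)) S) :
    ‖S‖ ≤ Real.exp (‖w‖ * B) * A := by
  rw [← hS.tsum_eq]
  refine tsum_of_norm_bounded (hA.mul_left _) fun j => ?_
  obtain hj | hj := lt_or_ge B j.natAbs
  · simp [hB j hj]
  · rw [norm_mul, norm_real, Real.norm_of_nonneg (ha j), norm_exp, mul_comm]
    gcongr
    · exact ha j
    · calc (-I * w * j).re ≤ ‖-I * w * j‖ := re_le_norm _
        _ = ‖w‖ * j.natAbs := by simp
        _ ≤ ‖w‖ * B := by gcongr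

theorem norm_exp_mul_add_sub_le {u' u'' u : ℤ → ℕ} {b : ℤ}
    (hu : ∀ j, u j ≤ u' (j - b) + u'' j) {B : ℕ} (hB' : ∀ j : ℤ, B < j.natAbs → u' (j - b) = 0)
    (hB'' : ∀ j : ℤ, B < j.natAbs → u'' j = 0) {l' l'' l : ℝ}
    (hl' : HasSum (fun j => (u' j : ℝ)) l') (hl'' : HasSum (fun j => (u'' j : ℝ)) l'')
    (hl : HasSum (fun j => (u j : ℝ)) l) {w S' S'' S : ℂ}
    (hS' : HasSum (fun j : ℤ => (u' j : ℂ) * exp (-I * w * j)) S')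
    (hS'' : HasSum (fun j : ℤ => (u'' j : ℂ) * exp (-I * w * j)) S'')
    (hS : HasSum (fun j : ℤ => (u j : ℂ) * exp (-I * w * j)) S) :
    ‖exp (-I * w * b) * S' + S'' - S‖ ≤ Real.exp (‖w‖ * B) * (l' + l'' - l) := by
  refine norm_le_exp_mul_of_hasSum (a := fun j => u' (j - b) + u'' j - u j)
    (fun j => sub_nonneg.mpr (by exact_mod_cast hu j))
    ((((Equiv.subRight b).hasSum_iff.mpr hl').add hl'').sub hl) (fun j hj => ?_) ?_
  · have huj : u j = 0 := by simpa [hB' j hj, hB'' j hj] using hu j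
    simp [huj, hB' j hj, hB'' j hj]
  · refine HasSum.congr_fun ((((Equiv.subRight b).hasSum_iff.mpr
      (hS'.mul_left (exp (-I * w * b)))).add hS'').sub hS) fun j => ?_
    have hexp : exp (-I * w * b) * exp (-I * w * (j - b)) = exp (-I * w * j) := by
      rw [← exp_add]
      ring_nf
    simp only [Function.comp_apply, Equiv.subRight_apply]
    push_cast
    linear_combination (-u' (j - b) : ℂ) * hexp

theorem hasSum_hilbertSeries [Decomposition ℳ] {Q : Submodule R M} (hQ : Q.IsHomogeneous ℳ)
    [Module.Finite k (M ⧸ Q)] (w : ℂ) :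
    HasSum (fun j : ℤ => (quotPieceDim k ℳ Q j : ℂ) * exp (-I * w * j))
      (hilbertSeries k ℳ Q w) := by
  have hfin : {j | (ℳ j).map (Q.mkQ.restrictScalars k) ≠ ⊥}.Finite :=
    WellFoundedGT.finite_ne_bot_of_iSupIndep (isInternal_map_mkQ hQ).submodule_iSupIndep
  refine (summable_of_hasFiniteSupport (hfin.subset fun j hj hbot => hj ?_)).hasSum
  have hzero : quotPieceDim k ℳ Q j = 0 := by rw [quotPieceDim, hbot, finrank_bot]
  simp [hzero]

theorem norm_hilbertSeries_le [Decomposition ℳ] {Q : Submodule R M} (hQ : Q.IsHomogeneous ℳ)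
    [Module.Finite k (M ⧸ Q)] {B : ℕ} (hB : ∀ j : ℤ, B < j.natAbs → ∀ m ∈ ℳ j, m ∈ Q) (w : ℂ) :
    ‖hilbertSeries k ℳ Q w‖ ≤ Real.exp (‖w‖ * B) * Module.finrank k (M ⧸ Q) :=
  norm_le_exp_mul_of_hasSum (fun _ => Nat.cast_nonneg _) (hasSum_quotPieceDim hQ)
    (fun j hj => by rw [quotPieceDim_eq_zero (hB j hj), Nat.cast_zero])
    (by simpa using hasSum_hilbertSeries hQ w)

theorem finite_quotient_of_le {Q Q' : Submodule R M} (h : Q ≤ Q') [Module.Finite k (M ⧸ Q)] :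
    Module.Finite k (M ⧸ Q') :=
  .of_surjective (((Submodule.factor h).restrictScalars k : (M ⧸ Q) →ₗ[k] (M ⧸ Q')))
    (Submodule.factor_surjective h)

theorem norm_hilbertSeries_sub_le [Decomposition ℳ'] [Decomposition ℳ] {f : M' →ₗ[R] M} {b : ℤ}
    (hf : ∀ j, ∀ x ∈ ℳ' j, f x ∈ ℳ (j + b)) {Q' : Submodule R M'} {Q : Submodule R M}
    (hQ' : Q'.IsHomogeneous ℳ') (hQ : Q.IsHomogeneous ℳ) (hQQ : Q' ≤ Q.comap f)
    [Module.Finite k (M' ⧸ Q')] [Module.Finite k (M ⧸ Q)] {B : ℕ}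
    (hB' : ∀ j : ℤ, B < (j + b).natAbs → ∀ x ∈ ℳ' j, x ∈ Q')
    (hB : ∀ j : ℤ, B < j.natAbs → ∀ m ∈ ℳ j, m ∈ Q) (w : ℂ) :
    ‖exp (-I * w * b) * hilbertSeries k ℳ' Q' w +
        hilbertSeries k ℳ (Q ⊔ LinearMap.range f) w - hilbertSeries k ℳ Q w‖ ≤
      Real.exp (‖w‖ * B) * (Module.finrank k (M' ⧸ Q') +
        Module.finrank k (M ⧸ Q ⊔ LinearMap.range f) - Module.finrank k (M ⧸ Q)) := by
  have hQf : (Q ⊔ LinearMap.range f).IsHomogeneous ℳ :=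
    isHomogeneous_sup hQ (isHomogeneous_range hf)
  have := finite_quotient_of_le (k := k) (le_sup_left : Q ≤ Q ⊔ LinearMap.range f)
  refine norm_exp_mul_add_sub_le (u := quotPieceDim k ℳ Q) (u' := quotPieceDim k ℳ' Q')
    (u'' := quotPieceDim k ℳ (Q ⊔ LinearMap.range f)) (b := b) (fun j => ?_)
    (fun j hj => quotPieceDim_eq_zero (hB' (j - b) (by simpa using hj)))
    (fun j hj => quotPieceDim_eq_zero fun m hm => Submodule.mem_sup_left (hB j hj m hm))
    (hasSum_quotPieceDim hQ') (hasSum_quotPieceDim hQf) (hasSum_quotPieceDim hQ)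
    (hasSum_hilbertSeries hQ' w) (hasSum_hilbertSeries hQf w) (hasSum_hilbertSeries hQ w)
  simpa using quotPieceDim_le (k := k) hQ hQQ hf (j - b)

end HilbertSeries

theorem tendsto_inv_pow_atTop {p : ℕ} [Fact p.Prime] :
    Tendsto (fun n => ((p : ℝ) ^ n)⁻¹) atTop (nhds 0) :=
  (tendsto_pow_atTop_atTop_of_one_lt
    (by exact_mod_cast (Fact.out : p.Prime).one_lt)).inv_tendsto_atTop

section FrobeniusPoincareTerm

open Asymptotics DirectSum

variable {k R M' M : Type*} [Field k] [CommRing R] [Algebra k R]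
  [AddCommGroup M'] [Module R M'] [Module k M'] [IsScalarTower k R M']
  [AddCommGroup M] [Module R M] [Module k M] [IsScalarTower k R M]

/-- The `n`-th term `F_n(M/N,R,I,d)(y)` of the sequence defining the Frobenius–Poincaré function
of `M/N`, computed inside `M` so that filtrations of `M` need no gradings on subquotients. -/
def frobeniusPoincareTerm (k : Type*) {R M : Type*} [Field k] [CommRing R] [Algebra k R]
    [AddCommGroup M] [Module R M] [Module k M] [IsScalarTower k R M]
    (ℳ : ℤ → Submodule k M) (I : Ideal R) (p d : ℕ) (N : Submodule R M) (y : ℂ) (n : ℕ) : ℂ :=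
  hilbertSeries k ℳ (N ⊔ bracketPow I (p ^ n) • ⊤) (y / p ^ n) / (p ^ n) ^ d

theorem frobeniusPoincareTerm_top (ℳ : ℤ → Submodule k M) (I : Ideal R) (p d : ℕ) (y : ℂ) (n : ℕ) :
    frobeniusPoincareTerm k ℳ I p d ⊤ y n = 0 := by
  rw [frobeniusPoincareTerm, top_sup_eq, hilbertSeries]
  simp [quotPieceDim_eq_zero]

theorem exists_supportDim_le (k R M : Type*) [Field k] [CommRing R] [Algebra k R]
    [Algebra.FiniteType k R] [AddCommGroup M] [Module R M] :
    ∃ d : ℕ, Module.supportDim R M ≤ d := by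
  obtain ⟨n, φ, hφ⟩ := Algebra.FiniteType.iff_quotient_mvPolynomial''.mp ‹Algebra.FiniteType k R›
  refine ⟨n, (Module.supportDim_le_ringKrullDim R M).trans
    ((ringKrullDim_le_of_surjective φ.toRingHom hφ).trans ?_)⟩
  simp

theorem finite_quotient_of_bracketPow_smul_le [Algebra.FiniteType k R] [Module.Finite R M]
    {I : Ideal R} (hI : Function.Surjective (algebraMap k (R ⧸ I.radical))) {q : ℕ} (hq : 1 ≤ q)
    {Q : Submodule R M} (hQ : bracketPow I q • ⊤ ≤ Q) : Module.Finite k (M ⧸ Q) := by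
  obtain ⟨d, hd⟩ := exists_supportDim_le k R M
  obtain ⟨C, hC⟩ := exists_finrank_quotient_le (k := k) hI hd
  exact (hC q hq Q hQ).1

theorem finrank_quotient_sup_smul_top (N : Submodule R M) (J : Ideal R) :
    Module.finrank k ((M ⧸ N) ⧸ J • (⊤ : Submodule R (M ⧸ N))) =
      Module.finrank k (M ⧸ N ⊔ J • ⊤) := by
  rw [← map_mkQ_smul_top, finrank_quotient_quotient_map]

theorem isHomogeneous_sup_bracketPow_smul_top {k R M : Type*} [Field k] [CommRing R] [Algebra k R]
    [AddCommGroup M] [Module R M] [Module k M] {𝒜 : ℤ → Submodule k R} [GradedAlgebra 𝒜]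
    {ℳ : ℤ → Submodule k M} [Decomposition ℳ] [SetLike.GradedSMul 𝒜 ℳ] {p : ℕ} [ExpChar R p]
    {I : Ideal R} (hIh : I.IsHomogeneous 𝒜) {N : Submodule R M} (hN : N.IsHomogeneous ℳ) (n : ℕ) :
    (N ⊔ bracketPow I (p ^ n) • ⊤).IsHomogeneous ℳ :=
  isHomogeneous_sup hN (isHomogeneous_smul_top (isHomogeneous_bracketPow hIh n))

variable [Algebra.FiniteType k R] [Module.Finite R M'] [Module.Finite R M]
  {𝒜 : ℤ → Submodule k R} [GradedAlgebra 𝒜]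
  {ℳ' : ℤ → Submodule k M'} [Decomposition ℳ'] [SetLike.GradedSMul 𝒜 ℳ']
  {ℳ : ℤ → Submodule k M} [Decomposition ℳ] [SetLike.GradedSMul 𝒜 ℳ]
  {p : ℕ} [Fact p.Prime] [CharP R p] {I : Ideal R}

theorem exists_norm_frobeniusPoincareTerm_le
    (hI : Function.Surjective (algebraMap k (R ⧸ I.radical))) (hIh : I.IsHomogeneous 𝒜)
    {N : Submodule R M} (hN : N.IsHomogeneous ℳ) (d : ℕ) (y : ℂ) :
    ∃ C : ℝ, ∀ n, ‖frobeniusPoincareTerm k ℳ I p d N y n‖ ≤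
      C * (Module.finrank k (M ⧸ N ⊔ bracketPow I (p ^ n) • ⊤) / (p ^ n) ^ d) := by
  obtain ⟨L, hL⟩ := exists_mem_of_lt_natAbs (ℳ := ℳ) hI hIh
  have hp : 0 < p := (Fact.out : p.Prime).pos
  refine ⟨Real.exp (‖y‖ * L), fun n => ?_⟩
  have hhom := isHomogeneous_sup_bracketPow_smul_top (p := p) hIh hN n
  have := finite_quotient_of_bracketPow_smul_le (k := k) hI (Nat.pow_pos hp)
    (le_sup_right : bracketPow I (p ^ n) • ⊤ ≤ N ⊔ bracketPow I (p ^ n) • ⊤)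
  have h := norm_hilbertSeries_le hhom
    (hL (p ^ n) (Nat.pow_pos hp) _ le_sup_right hhom) (y / p ^ n)
  have hexp : ‖y / p ^ n‖ * (L * p ^ n : ℕ) = ‖y‖ * L := by
    have : (p : ℝ) ≠ 0 := by positivity
    simp only [norm_div, norm_pow, norm_natCast, Nat.cast_mul, Nat.cast_pow]
    field_simp
  rw [hexp] at h
  rw [frobeniusPoincareTerm, norm_div, norm_pow, norm_pow, norm_natCast, ← mul_div_assoc]
  gcongr

theorem isBigO_one_frobeniusPoincareTerm
    (hI : Function.Surjective (algebraMap k (R ⧸ I.radical))) (hIh : I.IsHomogeneous 𝒜)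
    {N : Submodule R M} (hN : N.IsHomogeneous ℳ) {d : ℕ}
    (hd : Module.supportDim R (M ⧸ N) ≤ d) (y : ℂ) :
    frobeniusPoincareTerm k ℳ I p d N y =O[atTop] fun _ => (1 : ℝ) := by
  obtain ⟨E, hE⟩ := exists_norm_frobeniusPoincareTerm_le (ℳ := ℳ) (p := p) hI hIh hN d y
  obtain ⟨C, hC⟩ := exists_finrank_quotient_le (k := k) hI hd
  have hp : 0 < p := (Fact.out : p.Prime).pos
  refine (IsBigO.of_bound' (.of_forall fun n => (hE n).trans (le_abs_self _))).trans
    (isBigO_const_mul_self E _ _ |>.trans (.of_bound C (.of_forall fun n => ?_)))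
  have h := (hC (p ^ n) (Nat.pow_pos hp) _ le_rfl).2
  rw [finrank_quotient_sup_smul_top] at h
  rw [norm_one, mul_one, Real.norm_of_nonneg (by positivity), div_le_iff₀ (by positivity)]
  exact_mod_cast h

theorem isBigO_inv_frobeniusPoincareTerm
    (hI : Function.Surjective (algebraMap k (R ⧸ I.radical))) (hIh : I.IsHomogeneous 𝒜)
    {N : Submodule R M} (hN : N.IsHomogeneous ℳ) {d : ℕ}
    (hd : Module.supportDim R (M ⧸ N) + 1 ≤ d) (y : ℂ) :
    frobeniusPoincareTerm k ℳ I p d N y =O[atTop] fun n => ((p : ℝ) ^ n)⁻¹ := by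
  obtain ⟨E, hE⟩ := exists_norm_frobeniusPoincareTerm_le (ℳ := ℳ) (p := p) hI hIh hN d y
  obtain ⟨C, hC⟩ := exists_mul_finrank_quotient_le (k := k) hI hd
  have hp : 0 < p := (Fact.out : p.Prime).pos
  refine (IsBigO.of_bound' (.of_forall fun n => (hE n).trans (le_abs_self _))).trans
    (isBigO_const_mul_self E _ _ |>.trans (.of_bound C (.of_forall fun n => ?_)))
  have h := hC (p ^ n) (Nat.pow_pos hp) _ le_rfl
  rw [finrank_quotient_sup_smul_top] at h
  rw [Real.norm_of_nonneg (by positivity), Real.norm_of_nonneg (by positivity), ← div_eq_mul_inv,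
    div_le_div_iff₀ (by positivity) (by positivity), mul_comm]
  exact_mod_cast h

theorem isBigO_exp_mul_frobeniusPoincareTerm_sub
    (hI : Function.Surjective (algebraMap k (R ⧸ I.radical))) (hIh : I.IsHomogeneous 𝒜)
    {N : Submodule R M} (hN : N.IsHomogeneous ℳ) {d : ℕ}
    (hd : Module.supportDim R (M ⧸ N) ≤ d) (b : ℤ) (y : ℂ) :
    (fun n => exp (-Complex.I * (y / p ^ n) * b) * frobeniusPoincareTerm k ℳ I p d N y n -
      frobeniusPoincareTerm k ℳ I p d N y n) =O[atTop] fun n => ((p : ℝ) ^ n)⁻¹ := by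
  have hlin : (fun n : ℕ => -Complex.I * (y / p ^ n) * b) =O[atTop] fun n => ((p : ℝ) ^ n)⁻¹ :=
    .of_bound (‖y‖ * |b|) (.of_forall fun n => le_of_eq (by simp; ring))
  have hexp : (fun n : ℕ => exp (-Complex.I * (y / p ^ n) * b) - 1) =O[atTop]
      fun n => ((p : ℝ) ^ n)⁻¹ := by
    simpa [Function.comp_def] using ((differentiableAt_exp (𝕜 := ℂ) (x := 0)
      ).isBigO_sub.comp_tendsto (hlin.trans_tendsto tendsto_inv_pow_atTop)).trans
        (by simpa [Function.comp_def] using hlin)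
  simpa [sub_mul] using hexp.mul (isBigO_one_frobeniusPoincareTerm (p := p) hI hIh hN hd y)

theorem exists_norm_hilbertSeries_sub_le
    (hI : Function.Surjective (algebraMap k (R ⧸ I.radical))) (hIh : I.IsHomogeneous 𝒜)
    {f : M' →ₗ[R] M} {b : ℤ} (hf : ∀ j, ∀ x ∈ ℳ' j, f x ∈ ℳ (j + b))
    {N : Submodule R M} (hN : N.IsHomogeneous ℳ) (y : ℂ) :
    ∃ E : ℝ, 0 ≤ E ∧ ∀ n, ‖exp (-Complex.I * (y / p ^ n) * b) *
        hilbertSeries k ℳ' (N.comap f ⊔ bracketPow I (p ^ n) • ⊤) (y / p ^ n) +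
      hilbertSeries k ℳ ((N ⊔ LinearMap.range f) ⊔ bracketPow I (p ^ n) • ⊤) (y / p ^ n) -
      hilbertSeries k ℳ (N ⊔ bracketPow I (p ^ n) • ⊤) (y / p ^ n)‖ ≤
      E * (Module.finrank k (M' ⧸ N.comap f ⊔ bracketPow I (p ^ n) • ⊤) +
        Module.finrank k (M ⧸ (N ⊔ LinearMap.range f) ⊔ bracketPow I (p ^ n) • ⊤) -
        Module.finrank k (M ⧸ N ⊔ bracketPow I (p ^ n) • ⊤)) := by
  obtain ⟨L', hL'⟩ := exists_mem_of_lt_natAbs (ℳ := ℳ') hI hIh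
  obtain ⟨L, hL⟩ := exists_mem_of_lt_natAbs (ℳ := ℳ) hI hIh
  have hp : 0 < p := (Fact.out : p.Prime).pos
  refine ⟨Real.exp (‖y‖ * (L' + b.natAbs + L : ℕ)), by positivity, fun n => ?_⟩
  have hq : 1 ≤ p ^ n := Nat.pow_pos hp
  have hhom' := isHomogeneous_sup_bracketPow_smul_top (p := p) hIh (isHomogeneous_comap hf hN) n
  have hhom := isHomogeneous_sup_bracketPow_smul_top (p := p) hIh hN n
  have hle : N.comap f ⊔ bracketPow I (p ^ n) • ⊤ ≤ (N ⊔ bracketPow I (p ^ n) • ⊤).comap f :=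
    sup_le (Submodule.comap_mono le_sup_left)
      ((Submodule.smul_top_le_comap_smul_top _ f).trans (Submodule.comap_mono le_sup_right))
  have := finite_quotient_of_bracketPow_smul_le (k := k) hI hq
    (le_sup_right : bracketPow I (p ^ n) • ⊤ ≤ N.comap f ⊔ bracketPow I (p ^ n) • ⊤)
  have := finite_quotient_of_bracketPow_smul_le (k := k) hI hq
    (le_sup_right : bracketPow I (p ^ n) • ⊤ ≤ N ⊔ bracketPow I (p ^ n) • ⊤)
  have h := norm_hilbertSeries_sub_le hf hhom' hhom hle (B := (L' + b.natAbs + L) * p ^ n)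
    (fun j hj => hL' _ hq _ le_sup_right hhom' j ?_)
    (fun j hj => hL _ hq _ le_sup_right hhom j ?_) (y / p ^ n)
  · have hexp : ‖y / p ^ n‖ * ((L' + b.natAbs + L) * p ^ n : ℕ) =
        ‖y‖ * (L' + b.natAbs + L : ℕ) := by
      have : (p : ℝ) ≠ 0 := by positivity
      rw [Nat.cast_mul, Nat.cast_pow, norm_div, norm_pow, norm_natCast]
      field_simp
    rwa [hexp, sup_right_comm] at h
  · have hb : b.natAbs ≤ b.natAbs * p ^ n := Nat.le_mul_of_pos_right _ hq
    have hj' := hj.trans_le (Int.natAbs_add_le j b)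
    rw [add_mul, add_mul] at hj'
    lia
  · exact (Nat.mul_le_mul_right _ (Nat.le_add_left _ _)).trans_lt hj

theorem isBigO_exp_mul_frobeniusPoincareTerm_comap_add_sub
    (hI : Function.Surjective (algebraMap k (R ⧸ I.radical))) (hIh : I.IsHomogeneous 𝒜)
    {f : M' →ₗ[R] M} {b : ℤ} (hf : ∀ j, ∀ x ∈ ℳ' j, f x ∈ ℳ (j + b))
    {N : Submodule R M} (hN : N.IsHomogeneous ℳ) {d : ℕ}
    (hd : Module.supportDim R (M ⧸ N) ≤ d) (y : ℂ) :
    (fun n => exp (-Complex.I * (y / p ^ n) * b) *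
        frobeniusPoincareTerm k ℳ' I p d (N.comap f) y n +
      frobeniusPoincareTerm k ℳ I p d (N ⊔ LinearMap.range f) y n -
      frobeniusPoincareTerm k ℳ I p d N y n) =O[atTop] fun n => ((p : ℝ) ^ n)⁻¹ := by
  obtain ⟨E, hE0, hE⟩ := exists_norm_hilbertSeries_sub_le (ℳ' := ℳ') (p := p) hI hIh hf hN y
  obtain ⟨C, hC⟩ := exists_pow_mul_finrank_add_finrank_sup_le (k := k) (p := p) hI f hd
  have hp : (0 : ℝ) < p := mod_cast (Fact.out : p.Prime).pos
  refine .of_bound (E * C) (.of_forall fun n => ?_)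
  have hle : ((Module.finrank k (M' ⧸ N.comap f ⊔ bracketPow I (p ^ n) • ⊤) +
        Module.finrank k (M ⧸ (N ⊔ LinearMap.range f) ⊔ bracketPow I (p ^ n) • ⊤) -
        Module.finrank k (M ⧸ N ⊔ bracketPow I (p ^ n) • ⊤)) : ℝ) ≤
      C * (p ^ n) ^ d / p ^ n := by
    rw [le_div_iff₀' (by positivity), mul_sub, sub_le_iff_le_add']
    exact_mod_cast hC n
  simp only [frobeniusPoincareTerm]
  rw [mul_div_assoc', ← add_div, ← sub_div, norm_div, norm_pow, norm_pow, norm_natCast, norm_inv,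
    norm_pow, Real.norm_of_nonneg hp.le, div_le_iff₀ (by positivity)]
  calc _ ≤ _ := hE n
    _ ≤ E * (C * (p ^ n) ^ d / p ^ n) := by gcongr
    _ = E * C * (p ^ n : ℝ)⁻¹ * (p ^ n) ^ d := by ring

theorem isBigO_frobeniusPoincareTerm_comap_add_sub
    (hI : Function.Surjective (algebraMap k (R ⧸ I.radical))) (hIh : I.IsHomogeneous 𝒜)
    {f : M' →ₗ[R] M} {b : ℤ} (hf : ∀ j, ∀ x ∈ ℳ' j, f x ∈ ℳ (j + b))
    {N : Submodule R M} (hN : N.IsHomogeneous ℳ) {d : ℕ}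
    (hd : Module.supportDim R (M ⧸ N) ≤ d) (y : ℂ) :
    (fun n => frobeniusPoincareTerm k ℳ' I p d (N.comap f) y n +
      frobeniusPoincareTerm k ℳ I p d (N ⊔ LinearMap.range f) y n -
      frobeniusPoincareTerm k ℳ I p d N y n) =O[atTop] fun n => ((p : ℝ) ^ n)⁻¹ := by
  have hd' : Module.supportDim R (M' ⧸ N.comap f) ≤ d :=
    (Module.supportDim_le_of_injective _ (mapQ_comap_injective f N)).trans hd
  exact ((isBigO_exp_mul_frobeniusPoincareTerm_comap_add_sub hI hIh hf hN hd y).sub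
    (isBigO_exp_mul_frobeniusPoincareTerm_sub hI hIh (isHomogeneous_comap hf hN) hd' b
      y)).congr_left fun n => by ring

end FrobeniusPoincareTerm

section PrimeFiltration

open Asymptotics DirectSum

theorem supportDim_quotient_le_of_annihilator_le {R M : Type*} [CommRing R] [AddCommGroup M]
    [Module R M] [Module.Finite R M] {P : Ideal R} (hP : Module.annihilator R M ≤ P) :
    Module.supportDim R (R ⧸ P) ≤ Module.supportDim R M := by
  rw [Module.supportDim_quotient_eq_ringKrullDim,
    Module.supportDim_eq_ringKrullDim_quotient_annihilator]
  exact ringKrullDim_le_of_surjective (Ideal.Quotient.factor hP)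
    (Ideal.Quotient.factor_surjective hP)

variable {k R M : Type*} [Field k] [CommRing R] [AddCommGroup M] [Module R M] [Module k M]
  {ℳ : ℤ → Submodule k M}

theorem exists_mem_notMem_of_ne_top [Decomposition ℳ] {N : Submodule R M} (hN : N ≠ ⊤) :
    ∃ b, ∃ x ∈ ℳ b, x ∉ N := by
  classical
  by_contra! h
  refine hN (eq_top_iff.mpr fun m _ => ?_)
  rw [← sum_support_decompose ℳ m]
  exact Submodule.sum_mem _ fun j _ => h j _ (decompose ℳ m j).2

variable [Algebra k R] {𝒜 : ℤ → Submodule k R} [SetLike.GradedSMul 𝒜 ℳ]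

theorem toSpanSingleton_mem {x : M} {b : ℤ} (hx : x ∈ ℳ b) (j : ℤ) :
    ∀ r ∈ 𝒜 j, LinearMap.toSpanSingleton R M x r ∈ ℳ (j + b) :=
  fun _ hr => SetLike.GradedSMul.smul_mem hr hx

variable [GradedAlgebra 𝒜] [Decomposition ℳ]

theorem exists_isPrime_comap_toSpanSingleton [IsNoetherianRing R] {N : Submodule R M}
    (hN : N.IsHomogeneous ℳ) (hN_top : N ≠ ⊤) :
    ∃ b, ∃ x ∈ ℳ b, x ∉ N ∧ Ideal.IsPrime (N.comap (LinearMap.toSpanSingleton R M x)) ∧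
      (N.comap (LinearMap.toSpanSingleton R M x)).IsHomogeneous 𝒜 := by
  obtain ⟨_, ⟨x, b, hx, hxN, rfl⟩, hmax⟩ := wellFounded_gt.has_min
    {P : Ideal R | ∃ x b, x ∈ ℳ b ∧ x ∉ N ∧ N.comap (LinearMap.toSpanSingleton R M x) = P}
    (by
      obtain ⟨b, x, hx, hxN⟩ := exists_mem_notMem_of_ne_top (ℳ := ℳ) hN_top
      exact ⟨_, x, b, hx, hxN, rfl⟩)
  have hhom : (N.comap (LinearMap.toSpanSingleton R M x)).IsHomogeneous 𝒜 :=
    isHomogeneous_comap (toSpanSingleton_mem hx) hN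
  refine ⟨b, x, hx, hxN,
    Ideal.IsHomogeneous.isPrime_of_homogeneous_mem_or_mem hhom (fun h => hxN ?_) ?_, hhom⟩
  · simpa using (Ideal.eq_top_iff_one _).mp h
  · rintro r s - ⟨a, hs⟩ hrs
    refine or_iff_not_imp_right.mpr fun hsx => ?_
    have hle : N.comap (LinearMap.toSpanSingleton R M x) ≤
        N.comap (LinearMap.toSpanSingleton R M (s • x)) := fun t ht => by
      simpa [smul_comm t s] using N.smul_mem s ht
    rw [eq_of_le_of_not_lt hle (hmax _ ⟨s • x, _, smul_mem_of_mem hs hx, hsx, rfl⟩)]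
    simpa [mul_smul] using hrs

variable [IsScalarTower k R M] [Algebra.FiniteType k R] [Module.Finite R M]
  {p : ℕ} [Fact p.Prime] [CharP R p] {I : Ideal R}

theorem exists_isPrime_isBigO_sub_sum
    (hI : Function.Surjective (algebraMap k (R ⧸ I.radical))) (hIh : I.IsHomogeneous 𝒜)
    {N : Submodule R M} (hN : N.IsHomogeneous ℳ) {d : ℕ}
    (hd : Module.supportDim R (M ⧸ N) ≤ d) :
    ∃ S : Multiset (Ideal R), (∀ P ∈ S, P.IsPrime ∧ P.IsHomogeneous 𝒜 ∧
        Module.annihilator R (M ⧸ N) ≤ P) ∧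
      ∀ y, (fun n => frobeniusPoincareTerm k ℳ I p d N y n -
        (S.map fun P => frobeniusPoincareTerm k 𝒜 I p d P y n).sum) =O[atTop]
          fun n => ((p : ℝ) ^ n)⁻¹ := by
  have := Algebra.FiniteType.isNoetherianRing k R
  induction N using WellFoundedGT.induction with | ind N ih
  obtain rfl | hN_top := eq_or_ne N ⊤
  · refine ⟨0, by simp, fun y => ?_⟩
    simpa only [frobeniusPoincareTerm_top, Multiset.map_zero, Multiset.sum_zero, sub_zero] using
      isBigO_zero _ _
  obtain ⟨b, x, hx, hxN, hP, hPh⟩ := exists_isPrime_comap_toSpanSingleton (𝒜 := 𝒜) hN hN_top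
  let f := LinearMap.toSpanSingleton R M x
  have hf := fun j => toSpanSingleton_mem (𝒜 := 𝒜) hx j
  have hlt : N < N ⊔ LinearMap.range f := left_lt_sup.mpr fun hle =>
    hxN (hle ⟨1, LinearMap.toSpanSingleton_apply_one R M x⟩)
  have hsurj := Submodule.factor_surjective hlt.le
  obtain ⟨S, hS, hSN⟩ := ih _ hlt (isHomogeneous_sup hN (isHomogeneous_range hf))
    ((Module.supportDim_le_of_surjective _ hsurj).trans hd)
  refine ⟨N.comap f ::ₘ S, ?_, fun y => ?_⟩
  · rw [Multiset.forall_mem_cons]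
    refine ⟨⟨hP, hPh, fun r hr => ?_⟩, fun P hPS =>
      ⟨(hS P hPS).1, (hS P hPS).2.1,
        (LinearMap.annihilator_le_of_surjective _ hsurj).trans (hS P hPS).2.2⟩⟩
    exact (Submodule.Quotient.mk_eq_zero N).mp (Module.mem_annihilator.mp hr (N.mkQ x))
  · refine ((hSN y).sub
      (isBigO_frobeniusPoincareTerm_comap_add_sub (p := p) hI hIh hf hN hd y)).congr_left
      fun n => ?_
    rw [Multiset.map_cons, Multiset.sum_cons]
    ring

end PrimeFiltration

section FrobeniusGrading

open DirectSum

variable {k R M : Type*} [Field k] [CommRing R] [Algebra k R] [AddCommGroup M] [Module R M]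
  [Module k M] {𝒜 : ℤ → Submodule k R} {ℳ : ℤ → Submodule k M}

/-- The grading induced on a subalgebra `A` of `R`; it decomposes `A` as soon as `A` contains the
homogeneous components of its elements. -/
def subalgebraGrading (𝒜 : ℤ → Submodule k R) (A : Subalgebra k R) (j : ℤ) : Submodule k A :=
  (𝒜 j).comap A.val.toLinearMap

instance [SetLike.GradedMonoid 𝒜] (A : Subalgebra k R) :
    SetLike.GradedMonoid (subalgebraGrading 𝒜 A) where
  one_mem := SetLike.GradedOne.one_mem (A := 𝒜)
  mul_mem _ _ _ _ hx hy := SetLike.GradedMul.mul_mem (A := 𝒜) hx hy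

instance [SetLike.GradedSMul 𝒜 ℳ] (A : Subalgebra k R) :
    SetLike.GradedSMul (subalgebraGrading 𝒜 A) ℳ where
  smul_mem a _ _ _ hr hm :=
    (SetLike.GradedSMul.smul_mem (A := 𝒜) (show _ ∈ 𝒜 a from hr) hm :)

theorem isInternal_subalgebraGrading [Decomposition 𝒜] {A : Subalgebra k R}
    (hA : ∀ a ∈ A, ∀ j, (decompose 𝒜 a j : R) ∈ A) :
    DirectSum.IsInternal (subalgebraGrading 𝒜 A) := by
  classical
  let π (j : ℤ) : A →ₗ[k] A := LinearMap.restrict (p := A.toSubmodule)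
    (q := A.toSubmodule) (homogeneousComponent 𝒜 j) fun a ha => hA a ha j
  refine isInternal_submodule_of_iSupIndep_of_iSup_eq_top
    (iSupIndep_of_projections π (fun j x hx => Subtype.ext (decompose_of_mem_same 𝒜 hx))
      fun i j hij x hx => Subtype.ext (decompose_of_mem_ne 𝒜 hx hij)) ?_
  refine eq_top_iff.mpr fun x _ => ?_
  have hsum : x = ∑ j ∈ (decompose 𝒜 (x : R)).support, π j x :=
    Subtype.ext ((sum_support_decompose 𝒜 (x : R)).symm.trans (AddSubmonoidClass.coe_finsetSum
      (fun j => π j x) _).symm)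
  rw [hsum]
  exact Submodule.sum_mem _ fun j _ => Submodule.mem_iSup_of_mem j (decompose 𝒜 (x : R) j).2

variable [GradedAlgebra 𝒜] {p : ℕ} [ExpChar R p]

theorem iterateFrobenius_mem (e : ℕ) (j : ℤ) :
    ∀ x ∈ 𝒜 j, iterateFrobenius R p e x ∈ 𝒜 ((p ^ e : ℕ) * j) := fun x hx => by
  simpa [iterateFrobenius_def] using SetLike.pow_mem_graded (p ^ e) hx

theorem injective_natCast_mul {q : ℕ} (hq : 0 < q) : Function.Injective fun j : ℤ => q * j :=
  mul_right_injective₀ (by exact_mod_cast hq.ne')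

theorem decompose_mem_frobeniusSubalgebra (e : ℕ) {a : R}
    (ha : a ∈ frobeniusSubalgebra k R (p ^ e)) (i : ℤ) :
    (decompose 𝒜 a i : R) ∈ frobeniusSubalgebra k R (p ^ e) := by
  have hle : Submodule.span k (Set.range fun x : R => x ^ p ^ e) ≤
      (frobeniusSubalgebra k R (p ^ e)).toSubmodule.comap (homogeneousComponent 𝒜 i) := by
    rw [Submodule.span_le]
    rintro _ ⟨x, rfl⟩
    change (decompose 𝒜 (iterateFrobenius R p e x) i : R) ∈ frobeniusSubalgebra k R (p ^ e)
    by_cases hi : i ∈ Set.range fun j : ℤ => (p ^ e : ℕ) * j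
    · obtain ⟨j, rfl⟩ := hi
      rw [coe_decompose_map_of_injective _ (injective_natCast_mul (expChar_pow_pos R p e))
        (iterateFrobenius_mem e)]
      exact pow_mem_frobeniusSubalgebra _ _
    · rw [decompose_map_eq_zero _ (iterateFrobenius_mem e) hi]
      exact zero_mem _
  exact hle (frobeniusSubalgebra_toSubmodule (k := k) (R := R) (p ^ e) ▸ ha)

instance (e : ℕ) : GradedAlgebra (subalgebraGrading 𝒜 (frobeniusSubalgebra k R (p ^ e))) where
  toDecomposition := (isInternal_subalgebraGrading fun _ ha i =>
    decompose_mem_frobeniusSubalgebra e ha i).chooseDecomposition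

theorem toFrobeniusSubalgebra_mem (e : ℕ) (j : ℤ) :
    ∀ x ∈ 𝒜 j, toFrobeniusSubalgebra k R p e x ∈
      subalgebraGrading 𝒜 (frobeniusSubalgebra k R (p ^ e)) ((p ^ e : ℕ) * j) :=
  iterateFrobenius_mem e j

theorem isHomogeneous_map_toFrobeniusSubalgebra {I : Ideal R} (hI : I.IsHomogeneous 𝒜) (e : ℕ) :
    (I.map (toFrobeniusSubalgebra k R p e)).IsHomogeneous
      (subalgebraGrading 𝒜 (frobeniusSubalgebra k R (p ^ e))) :=
  isHomogeneous_map (𝒜 := 𝒜) (φ := toFrobeniusSubalgebra k R p e)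
    (fun _ ⟨j, hx⟩ => ⟨_, toFrobeniusSubalgebra_mem e j _ hx⟩) hI

theorem isHomogeneous_comap_frobeniusSubalgebra {P : Ideal R} (hP : P.IsHomogeneous 𝒜) (e : ℕ) :
    (P.comap (algebraMap (frobeniusSubalgebra k R (p ^ e)) R)).IsHomogeneous
      (subalgebraGrading 𝒜 (frobeniusSubalgebra k R (p ^ e))) := by
  intro j x hx
  have h := coe_decompose_map (ℳ' := subalgebraGrading 𝒜 (frobeniusSubalgebra k R (p ^ e)))
    (ℳ := 𝒜) (frobeniusSubalgebra k R (p ^ e)).val (b := 0)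
    (fun j x hx => (add_zero j).symm ▸ hx) x j
  exact (h ▸ hP _ hx :)

theorem span_range_toFrobeniusSubalgebra (e : ℕ) :
    Submodule.span k (Set.range (toFrobeniusSubalgebra k R p e)) = ⊤ := by
  refine Submodule.map_injective_of_injective
    (f := (frobeniusSubalgebra k R (p ^ e)).val.toLinearMap) Subtype.val_injective ?_
  rw [Submodule.map_span, ← Set.range_comp, Submodule.map_top]
  exact (frobeniusSubalgebra_toSubmodule (k := k) (R := R) (p ^ e)).symm.trans
    (Submodule.range_subtype (frobeniusSubalgebra k R (p ^ e)).toSubmodule).symm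

theorem subalgebraGrading_frobeniusSubalgebra_mul (e : ℕ) (j : ℤ) :
    subalgebraGrading 𝒜 (frobeniusSubalgebra k R (p ^ e)) ((p ^ e : ℕ) * j) =
      Submodule.span k (toFrobeniusSubalgebra k R p e '' 𝒜 j) := by
  refine le_antisymm (fun x hx => ?_) (Submodule.span_le.mpr ?_)
  · rw [← decompose_of_mem_same (subalgebraGrading 𝒜 _) hx]
    have hle : Submodule.span k (Set.range (toFrobeniusSubalgebra k R p e)) ≤
        (Submodule.span k (toFrobeniusSubalgebra k R p e '' 𝒜 j)).comap
          (homogeneousComponent (subalgebraGrading 𝒜 (frobeniusSubalgebra k R (p ^ e)))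
            ((p ^ e : ℕ) * j)) := by
      rw [Submodule.span_le]
      rintro _ ⟨r, rfl⟩
      refine Submodule.subset_span ⟨decompose 𝒜 r j, (decompose 𝒜 r j).2, ?_⟩
      exact (coe_decompose_map_of_injective _ (injective_natCast_mul (expChar_pow_pos R p e))
        (toFrobeniusSubalgebra_mem (𝒜 := 𝒜) e) r j).symm
    exact hle (span_range_toFrobeniusSubalgebra (k := k) (R := R) (p := p) e ▸ trivial)
  · rintro _ ⟨r, hr, rfl⟩
    exact toFrobeniusSubalgebra_mem e j r hr

theorem subalgebraGrading_frobeniusSubalgebra_eq_bot (e : ℕ) {i : ℤ}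
    (hi : i ∉ Set.range fun j : ℤ => (p ^ e : ℕ) * j) :
    subalgebraGrading 𝒜 (frobeniusSubalgebra k R (p ^ e)) i = ⊥ := by
  refine le_bot_iff.mp fun x hx => ?_
  rw [← decompose_of_mem_same (subalgebraGrading 𝒜 _) hx]
  have hle : Submodule.span k (Set.range (toFrobeniusSubalgebra k R p e)) ≤
      LinearMap.ker
        (homogeneousComponent (subalgebraGrading 𝒜 (frobeniusSubalgebra k R (p ^ e))) i) := by
    rw [Submodule.span_le]
    rintro _ ⟨r, rfl⟩
    exact decompose_map_eq_zero _ (toFrobeniusSubalgebra_mem (𝒜 := 𝒜) e) hi r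
  exact hle (span_range_toFrobeniusSubalgebra (k := k) (R := R) (p := p) e ▸ trivial)

end FrobeniusGrading

section LinearIndependencePow

theorem linearIndependent_of_ker_le_ker {k V V₁ V₂ ι : Type*} [Ring k] [AddCommGroup V]
    [Module k V] [AddCommGroup V₁] [Module k V₁] [AddCommGroup V₂] [Module k V₂]
    {f : V →ₗ[k] V₁} {g : V →ₗ[k] V₂} (hgf : LinearMap.ker g ≤ LinearMap.ker f) {a : ι → V}
    (ha : LinearIndependent k fun i => f (a i)) : LinearIndependent k fun i => g (a i) := by
  rw [linearIndependent_iff'] at ha ⊢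
  refine fun s c hc => ha s c ?_
  simp only [← map_smul, ← map_sum] at hc ⊢
  exact hgf hc

variable {k S : Type*} [Field k] [CommRing S] [Algebra k S] {p : ℕ} [Fact p.Prime] [CharP k p]

theorem linearIndependent_pow_pow_of_isGeometricallyReduced [Algebra.IsGeometricallyReduced k S]
    {ι : Type*} {a : ι → S} (ha : LinearIndependent k a) (e : ℕ) :
    LinearIndependent k fun i => a i ^ p ^ e := by
  induction e with
  | zero => simpa using ha
  | succ e ih => simpa [pow_succ, pow_mul] using linearIndependent_pow_of_isGeometricallyReduced ih

theorem linearIndependent_mkQ_pow_pow [CharP S p] [Algebra.IsGeometricallyReduced k S]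
    {U : Submodule k S} {ι : Type*} {a : ι → S} (ha : LinearIndependent k fun i => U.mkQ (a i))
    (e : ℕ) :
    LinearIndependent k fun i =>
      (Submodule.span k ((fun x : S => x ^ p ^ e) '' U)).mkQ (a i ^ p ^ e) := by
  let b := Module.Basis.ofVectorSpace k U
  obtain ⟨-, hpow, hdisj⟩ := linearIndependent_sum.mp
    (linearIndependent_pow_pow_of_isGeometricallyReduced (p := p)
      (b.linearIndependent.sumElim_of_quotient a ha) e)
  refine hpow.map (f := Submodule.mkQ _) ?_
  rw [Submodule.ker_mkQ]
  refine hdisj.symm.mono_right (Submodule.span_le.mpr ?_)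
  have hU : (U : Set S) = Submodule.span k (Set.range fun i => (b i : S)) := by
    have h := Submodule.map_span U.subtype (Set.range b)
    rw [b.span_eq, Submodule.map_top, Submodule.range_subtype, ← Set.range_comp] at h
    exact congrArg _ h
  rw [hU]
  refine (Submodule.image_span_subset (LinearMap.iterateFrobenius k S p e) _ _).mpr ?_
  rintro _ ⟨i, rfl⟩
  exact Submodule.subset_span ⟨i, rfl⟩

end LinearIndependencePow

section FrobeniusPullback

variable {k R : Type*} [Field k] [CommRing R] [Algebra k R] {𝒜 : ℤ → Submodule k R}
  [GradedAlgebra 𝒜] {p : ℕ} [Fact p.Prime] [CharP R p]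

theorem restrictScalars_map_toFrobeniusSubalgebra (K : Ideal R) (e : ℕ) :
    (K.map (toFrobeniusSubalgebra k R p e)).restrictScalars k =
      Submodule.span k (toFrobeniusSubalgebra k R p e '' K) := by
  rw [Ideal.map, ← Ideal.submodule_span_eq,
    ← Submodule.span_smul_of_span_eq_top (span_range_toFrobeniusSubalgebra e)]
  congr 1
  ext x
  constructor
  · rintro ⟨_, ⟨r, rfl⟩, _, ⟨s, hs, rfl⟩, rfl⟩
    exact ⟨r * s, K.mul_mem_left r hs, map_mul _ r s⟩
  · rintro ⟨s, hs, rfl⟩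
    exact ⟨1, ⟨1, map_one _⟩, _, ⟨s, hs, rfl⟩, one_mul _⟩

theorem linearIndependent_mkQ_toFrobeniusSubalgebra {P K : Ideal R}
    [P.IsPrime] [Algebra.IsGeometricallyReduced k (R ⧸ P)] {ι : Type*} {a : ι → R}
    (ha : LinearIndependent k fun i => (P ⊔ K).mkQ (a i)) (e : ℕ) :
    LinearIndependent k fun i =>
      (P.comap (algebraMap (frobeniusSubalgebra k R (p ^ e)) R) ⊔
        K.map (toFrobeniusSubalgebra k R p e)).mkQ (toFrobeniusSubalgebra k R p e (a i)) := by
  have : Nontrivial R := CharP.nontrivial_of_char_ne_one (Fact.out : p.Prime).ne_one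
  have : CharP k p := (algebraMap k R).charP (algebraMap k R).injective p
  have : CharP (R ⧸ P) p := charP_of_injective_algebraMap (algebraMap k (R ⧸ P)).injective p
  let U : Submodule k (R ⧸ P) := (K.map (Ideal.Quotient.mk P)).restrictScalars k
  have haU : LinearIndependent k fun i => U.mkQ (Ideal.Quotient.mk P (a i)) := by
    refine linearIndependent_of_ker_le_ker (f := (P ⊔ K).mkQ.restrictScalars k)
      (g := U.mkQ ∘ₗ (Ideal.Quotient.mkₐ k P).toLinearMap) (fun r hr => ?_) ha
    have hr' : r ∈ (K.map (Ideal.Quotient.mk P)).comap (Ideal.Quotient.mk P) :=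
      (Submodule.Quotient.mk_eq_zero U).mp hr
    rw [Ideal.comap_map_of_surjective' _ Ideal.Quotient.mk_surjective, Ideal.mk_ker,
      sup_comm] at hr'
    exact (Submodule.Quotient.mk_eq_zero _).mpr hr'
  let W := Submodule.span k ((fun x : R ⧸ P => x ^ p ^ e) '' U)
  refine linearIndependent_of_ker_le_ker (f := W.mkQ ∘ₗ (Ideal.Quotient.mkₐ k P).toLinearMap ∘ₗ
      (frobeniusSubalgebra k R (p ^ e)).val.toLinearMap)
    (g := (Submodule.mkQ _).restrictScalars k) (fun x hx => ?_) (by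
      simpa [W] using linearIndependent_mkQ_pow_pow haU e)
  obtain ⟨s, hs, t, ht, rfl⟩ := Submodule.mem_sup.mp ((Submodule.Quotient.mk_eq_zero _).mp hx)
  have hle : Submodule.span k (toFrobeniusSubalgebra k R p e '' K) ≤ W.comap
      ((Ideal.Quotient.mkₐ k P).toLinearMap ∘ₗ
        (frobeniusSubalgebra k R (p ^ e)).val.toLinearMap) := by
    rw [Submodule.span_le]
    rintro _ ⟨r, hr, rfl⟩
    exact Submodule.subset_span ⟨_, Ideal.mem_map_of_mem _ hr, (map_pow _ r _).symm⟩
  rw [← restrictScalars_map_toFrobeniusSubalgebra] at hle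
  refine (Submodule.Quotient.mk_eq_zero W).mpr ?_
  change Ideal.Quotient.mk P (s + t) ∈ W
  have hs' : Ideal.Quotient.mk P (s : R) = 0 := Ideal.Quotient.eq_zero_iff_mem.mpr hs
  rw [map_add, hs', zero_add]
  exact hle ht

theorem map_mkQ_subalgebraGrading_mul {P K : Ideal R} (e : ℕ) (j : ℤ) {ι : Type*} {a : ι → R}
    (ha : ∀ i, a i ∈ 𝒜 j)
    (hspan : (𝒜 j).map ((P ⊔ K).mkQ.restrictScalars k) ≤
      Submodule.span k (Set.range fun i => (P ⊔ K).mkQ (a i))) :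
    (subalgebraGrading 𝒜 (frobeniusSubalgebra k R (p ^ e)) ((p ^ e : ℕ) * j)).map
        ((P.comap (algebraMap (frobeniusSubalgebra k R (p ^ e)) R) ⊔
          K.map (toFrobeniusSubalgebra k R p e)).mkQ.restrictScalars k) =
      Submodule.span k (Set.range fun i =>
        (P.comap (algebraMap (frobeniusSubalgebra k R (p ^ e)) R) ⊔
          K.map (toFrobeniusSubalgebra k R p e)).mkQ (toFrobeniusSubalgebra k R p e (a i))) := by
  have : Nontrivial R := CharP.nontrivial_of_char_ne_one (Fact.out : p.Prime).ne_one
  have : CharP k p := (algebraMap k R).charP (algebraMap k R).injective p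
  set Q := P.comap (algebraMap (frobeniusSubalgebra k R (p ^ e)) R) ⊔
    K.map (toFrobeniusSubalgebra k R p e)
  let ψ : R →ₛₗ[iterateFrobenius k p e] frobeniusSubalgebra k R (p ^ e) :=
    { toFrobeniusSubalgebra k R p e with
      map_smul' := fun c x => Subtype.ext ((LinearMap.iterateFrobenius k R p e).map_smulₛₗ c x) }
  have hψ : P ⊔ K ≤ Q.comap (toFrobeniusSubalgebra k R p e) :=
    sup_le (fun x hx => Submodule.mem_sup_left (P.pow_mem_of_mem hx _ (expChar_pow_pos R p e)))
      (Ideal.map_le_iff_le_comap.mp le_sup_right)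
  let Ψ : (R ⧸ P ⊔ K) →ₛₗ[iterateFrobenius k p e] (frobeniusSubalgebra k R (p ^ e) ⧸ Q) :=
    ((P ⊔ K).restrictScalars k).mapQ (Q.restrictScalars k) ψ hψ
  rw [subalgebraGrading_frobeniusSubalgebra_mul, Submodule.map_span]
  refine le_antisymm (Submodule.span_le.mpr ?_) (Submodule.span_mono ?_)
  · rintro _ ⟨_, ⟨r, hr, rfl⟩, rfl⟩
    exact (Submodule.image_span_subset Ψ _ _).mpr
      (by rintro _ ⟨i, rfl⟩; exact Submodule.subset_span ⟨i, rfl⟩)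
      ⟨_, hspan ⟨r, hr, rfl⟩, rfl⟩
  · rintro _ ⟨i, rfl⟩
    exact ⟨_, ⟨_, ha i, rfl⟩, rfl⟩

theorem quotPieceDim_subalgebraGrading_mul (P K : Ideal R) [P.IsPrime]
    [Algebra.IsGeometricallyReduced k (R ⧸ P)] (e : ℕ) (j : ℤ) :
    quotPieceDim k (subalgebraGrading 𝒜 (frobeniusSubalgebra k R (p ^ e)))
        (P.comap (algebraMap (frobeniusSubalgebra k R (p ^ e)) R) ⊔
          K.map (toFrobeniusSubalgebra k R p e)) ((p ^ e : ℕ) * j) =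
      quotPieceDim k 𝒜 (P ⊔ K) j := by
  let b := Module.Basis.ofVectorSpace k ((𝒜 j).map ((P ⊔ K).mkQ.restrictScalars k))
  choose a ha hab using fun i => (b i).2
  have hba : (fun i => (P ⊔ K).mkQ (a i)) = Subtype.val ∘ b := funext hab
  have hli : LinearIndependent k fun i => (P ⊔ K).mkQ (a i) :=
    hba ▸ b.linearIndependent.map' (Submodule.subtype _) (Submodule.ker_subtype _)
  have hspan : (𝒜 j).map ((P ⊔ K).mkQ.restrictScalars k) =
      Submodule.span k (Set.range fun i => (P ⊔ K).mkQ (a i)) := by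
    have h := Submodule.map_span (Submodule.subtype _) (Set.range b)
    rw [b.span_eq, Submodule.map_top, Submodule.range_subtype, ← Set.range_comp] at h
    rwa [hba]
  rw [quotPieceDim, quotPieceDim, map_mkQ_subalgebraGrading_mul e j ha hspan.le,
    Module.finrank_eq_nat_card_basis b, Module.finrank_eq_nat_card_basis
      (.span (linearIndependent_mkQ_toFrobeniusSubalgebra hli e))]

theorem hilbertSeries_subalgebraGrading (P K : Ideal R) [P.IsPrime]
    [Algebra.IsGeometricallyReduced k (R ⧸ P)] (e : ℕ) (w : ℂ) :
    hilbertSeries k (subalgebraGrading 𝒜 (frobeniusSubalgebra k R (p ^ e)))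
        (P.comap (algebraMap (frobeniusSubalgebra k R (p ^ e)) R) ⊔
          K.map (toFrobeniusSubalgebra k R p e)) w =
      hilbertSeries k 𝒜 (P ⊔ K) (p ^ e * w) := by
  rw [hilbertSeries, ← (injective_natCast_mul (expChar_pow_pos R p e)).tsum_eq, hilbertSeries]
  · refine tsum_congr fun j => ?_
    rw [quotPieceDim_subalgebraGrading_mul]
    push_cast
    ring_nf
  · refine Function.support_subset_iff'.mpr fun i hi => ?_
    rw [quotPieceDim, subalgebraGrading_frobeniusSubalgebra_eq_bot e hi]
    simp

theorem bracketPow_map {S : Type*} [CommRing S] [CharP S p] (φ : R →+* S) (I : Ideal R) (n : ℕ) :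
    bracketPow (I.map φ) (p ^ n) = (bracketPow I (p ^ n)).map φ := by
  change (I.map φ).map (iterateFrobenius S p n) = (I.map (iterateFrobenius R p n)).map φ
  rw [Ideal.map_map, Ideal.map_map]
  congr 1
  ext x
  exact (φ.map_iterateFrobenius p x n).symm

theorem frobeniusPoincareTerm_subalgebraGrading (I P : Ideal R) [P.IsPrime]
    [Algebra.IsGeometricallyReduced k (R ⧸ P)] (d e : ℕ) (y : ℂ) (n : ℕ) :
    frobeniusPoincareTerm k (subalgebraGrading 𝒜 (frobeniusSubalgebra k R (p ^ e)))
        (I.map (toFrobeniusSubalgebra k R p e)) p d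
        (P.comap (algebraMap (frobeniusSubalgebra k R (p ^ e)) R)) y n =
      frobeniusPoincareTerm k 𝒜 I p d P (p ^ e * y) n := by
  have : CharP (frobeniusSubalgebra k R (p ^ e)) p :=
    (algebraMap (frobeniusSubalgebra k R (p ^ e)) R).charP Subtype.val_injective p
  rw [frobeniusPoincareTerm, frobeniusPoincareTerm, bracketPow_map, smul_eq_mul, smul_eq_mul,
    Ideal.mul_top, Ideal.mul_top, hilbertSeries_subalgebraGrading, mul_div_assoc]

end FrobeniusPullback

section Recursion

open Asymptotics
open scoped ENNReal Topology

theorem tendsto_zero_of_tendsto_succ_sub_mul {u : ℕ → ℂ}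
    (hu : u =O[atTop] fun _ => (1 : ℝ)) {ρ : ℂ} (hρ : ‖ρ‖ₑ ≠ 1)
    (h : Tendsto (fun n => u (n + 1) - ρ * u n) atTop (𝓝 0)) : Tendsto u atTop (𝓝 0) := by
  have hε := tendsto_zero_iff_enorm_tendsto_zero.mp h
  obtain ⟨L, hL_def⟩ : ∃ L, limsup (fun n => ‖u n‖ₑ) atTop = L := ⟨_, rfl⟩
  have hshift : limsup (fun n => ‖u (n + 1)‖ₑ) atTop = L :=
    (limsup_nat_add (fun n => ‖u n‖ₑ) 1).trans hL_def
  have hmul : limsup (fun n => ‖ρ * u n‖ₑ) atTop = ‖ρ‖ₑ * L := by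
    simp_rw [enorm_mul]
    rw [← hL_def]
    exact ENNReal.limsup_const_mul_of_ne_top enorm_ne_top
  have hle : L ≤ ‖ρ‖ₑ * L :=
    calc L = limsup (fun n => ‖u (n + 1)‖ₑ) atTop := hshift.symm
      _ ≤ limsup (fun n => ‖ρ * u n‖ₑ + ‖u (n + 1) - ρ * u n‖ₑ) atTop :=
        limsup_le_limsup (.of_forall fun n => by
          simpa using enorm_add_le (ρ * u n) (u (n + 1) - ρ * u n))
      _ = ‖ρ‖ₑ * L := (ENNReal.limsup_add_of_right_tendsto_zero hε _).trans hmul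
  have hge : ‖ρ‖ₑ * L ≤ L :=
    calc ‖ρ‖ₑ * L = limsup (fun n => ‖ρ * u n‖ₑ) atTop := hmul.symm
      _ ≤ limsup (fun n => ‖u (n + 1)‖ₑ + ‖u (n + 1) - ρ * u n‖ₑ) atTop :=
        limsup_le_limsup (.of_forall fun n => by
          simpa using enorm_sub_le (a := u (n + 1)) (b := u (n + 1) - ρ * u n))
      _ = L := (ENNReal.limsup_add_of_right_tendsto_zero hε _).trans hshift
  have hL : L ≠ ∞ := by
    obtain ⟨C, hC⟩ := hu.bound
    refine hL_def ▸ ((limsup_le_of_le (h := hC.mono fun n hn => ?_)).trans_lt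
      (ENNReal.ofReal_lt_top (r := C))).ne
    rw [← ofReal_norm]
    exact ENNReal.ofReal_le_ofReal (by simpa using hn)
  have hL0 : L = 0 := by
    by_contra hL0
    exact hρ ((ENNReal.mul_eq_right hL0 hL).mp (hge.antisymm hle))
  exact tendsto_zero_iff_enorm_tendsto_zero.mpr
    (tendsto_of_le_liminf_of_limsup_le zero_le (hL_def.trans hL0).le)

theorem exists_tendsto_of_isBigO_succ_sub_mul {u : ℕ → ℂ}
    (hu : u =O[atTop] fun _ => (1 : ℝ)) {ρ : ℝ} (hρ : 0 ≤ ρ) {g : ℕ → ℝ} (hg : Summable g)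
    (h : (fun n => u (n + 1) - ρ * u n) =O[atTop] g) : ∃ l, Tendsto u atTop (𝓝 l) := by
  obtain rfl | hρ1 := eq_or_ne ρ 1
  · refine cauchySeq_tendsto_of_complete (cauchySeq_of_summable_dist ?_)
    refine summable_of_isBigO_nat hg (h.norm_left.congr_left fun n => ?_)
    rw [dist_comm, dist_eq_norm, ofReal_one, one_mul]
  · refine ⟨0, tendsto_zero_of_tendsto_succ_sub_mul hu (fun hρ_enorm => hρ1 ?_)
      (h.trans_tendsto hg.tendsto_atTop_zero)⟩
    simpa [abs_of_nonneg hρ] using congrArg ENNReal.toReal hρ_enorm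

theorem isBigO_multiset_sum_sub_count {α : Type*} [DecidableEq α] (S : Multiset α) (a₀ : α)
    {f : α → ℕ → ℂ} {g : ℕ → ℝ} (hf : ∀ a ∈ S, a ≠ a₀ → f a =O[atTop] g) :
    (fun n => (S.map fun a => f a n).sum - S.count a₀ * f a₀ n) =O[atTop] g := by
  induction S using Multiset.induction_on with
  | empty => simpa using isBigO_zero _ _
  | cons a S ih =>
    rw [Multiset.forall_mem_cons] at hf
    specialize ih hf.2
    obtain rfl | ha := eq_or_ne a a₀
    · refine ih.congr_left fun n => ?_
      rw [Multiset.map_cons, Multiset.sum_cons, Multiset.count_cons_self]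
      push_cast
      ring
    · refine ((hf.1 ha).add ih).congr_left fun n => ?_
      rw [Multiset.map_cons, Multiset.sum_cons, Multiset.count_cons_of_ne ha.symm]
      ring

end Recursion

section Convergence

open Asymptotics DirectSum
open scoped Topology

variable {k R M : Type*} [Field k] [CommRing R] [Algebra k R]
  [AddCommGroup M] [Module R M] [Module k M] [IsScalarTower k R M]

theorem frobeniusPoincareTerm_restrictScalars {p : ℕ} [Fact p.Prime] [CharP R p]
    (ℳ : ℤ → Submodule k M) (I : Ideal R) (d e : ℕ) (N : Submodule R M) (y : ℂ) (n : ℕ) :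
    frobeniusPoincareTerm k ℳ (I.map (toFrobeniusSubalgebra k R p e)) p d
        (N.restrictScalars (frobeniusSubalgebra k R (p ^ e))) y n =
      (p ^ e) ^ d * frobeniusPoincareTerm k ℳ I p d N (p ^ e * y) (e + n) := by
  have hp : (p : ℂ) ≠ 0 := mod_cast (Fact.out : p.Prime).ne_zero
  rw [frobeniusPoincareTerm, frobeniusPoincareTerm, bracketPow_map_toFrobeniusSubalgebra_smul_top,
    ← Submodule.restrictScalars_sup, pow_add (p : ℂ), mul_div_mul_left _ _ (pow_ne_zero e hp),
    mul_pow, ← mul_div_assoc, mul_div_mul_left _ _ (by positivity)]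
  rfl

variable [Algebra.FiniteType k R] {𝒜 : ℤ → Submodule k R} [GradedAlgebra 𝒜]
  {p : ℕ} [Fact p.Prime] [CharP R p] {I : Ideal R}

theorem supportDim_quotient_add_one_le_of_lt {A : Type*} [CommRing A] {P Q : Ideal A} [P.IsPrime]
    (hPQ : P < Q) : Module.supportDim A (A ⧸ Q) + 1 ≤ Module.supportDim A (A ⧸ P) := by
  rw [Module.supportDim_quotient_eq_ringKrullDim, Module.supportDim_quotient_eq_ringKrullDim]
  obtain ⟨x, hxQ, hxP⟩ := SetLike.exists_of_lt hPQ
  exact ringKrullDim_succ_le_of_surjective (Ideal.Quotient.factor hPQ.le)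
    (Ideal.Quotient.factor_surjective _) (r := Ideal.Quotient.mk P x)
    (mem_nonZeroDivisors_of_ne_zero (mt Ideal.Quotient.eq_zero_iff_mem.mp hxP))
    (Ideal.Quotient.eq_zero_iff_mem.mpr hxQ)

theorem annihilator_quotient_restrictScalars {A B : Type*} [CommRing A] [CommRing B] [Algebra A B]
    (P : Ideal B) : Module.annihilator A (B ⧸ Submodule.restrictScalars A P) =
      P.comap (algebraMap A B) := by
  rw [(Submodule.Quotient.restrictScalarsEquiv A P).annihilator_eq,
    ← Module.comap_annihilator (R := B), Ideal.annihilator_quotient]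

theorem supportDim_quotient_restrictScalars_le {A B : Type*} [CommRing A] [CommRing B] [Algebra A B]
    [Module.Finite A B] (P : Ideal B) :
    Module.supportDim A (B ⧸ Submodule.restrictScalars A P) ≤ Module.supportDim B (B ⧸ P) :=
  (Module.supportDim_le_of_injective _
    (Submodule.Quotient.restrictScalarsEquiv A P).injective).trans supportDim_le_of_finite

theorem supportDim_quotient_comap_le {A B : Type*} [CommRing A] [CommRing B] [Algebra A B]
    [Module.Finite A B] (P : Ideal B) :
    Module.supportDim A (A ⧸ P.comap (algebraMap A B)) ≤ Module.supportDim B (B ⧸ P) :=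
  (supportDim_quotient_le_of_annihilator_le (annihilator_quotient_restrictScalars P).le).trans
    (supportDim_quotient_restrictScalars_le P)

theorem exists_isBigO_frobeniusPoincareTerm_sub_comap
    (hI : Function.Surjective (algebraMap k (R ⧸ I.radical))) (hIh : I.IsHomogeneous 𝒜)
    {P : Ideal R} [P.IsPrime] (hP : P.IsHomogeneous 𝒜) {d : ℕ}
    (hd : Module.supportDim R (R ⧸ P) ≤ d) (e : ℕ) :
    ∃ σ : ℕ, ∀ y, (fun n => (p ^ e) ^ d * frobeniusPoincareTerm k 𝒜 I p d P (p ^ e * y) (e + n) -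
      σ * frobeniusPoincareTerm k (subalgebraGrading 𝒜 (frobeniusSubalgebra k R (p ^ e)))
        (I.map (toFrobeniusSubalgebra k R p e)) p d
        (P.comap (algebraMap (frobeniusSubalgebra k R (p ^ e)) R)) y n) =O[atTop]
      fun n => ((p : ℝ) ^ n)⁻¹ := by
  classical
  let A := frobeniusSubalgebra k R (p ^ e)
  let P₀ := P.comap (algebraMap A R)
  have hp : 0 < p ^ e := Nat.pow_pos (Fact.out : p.Prime).pos
  have : Module.Finite A R := finite_frobeniusSubalgebra hp
  have : Algebra.FiniteType k A := finiteType_frobeniusSubalgebra hp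
  have : CharP A p := (algebraMap A R).charP Subtype.val_injective p
  have hIA := surjective_algebraMap_quotient_radical_map (p := p) hI e
  have hIAh := isHomogeneous_map_toFrobeniusSubalgebra (p := p) hIh e
  have hann : P₀ = Module.annihilator A (R ⧸ P.restrictScalars A) :=
    (annihilator_quotient_restrictScalars P).symm
  have hdA : Module.supportDim A (R ⧸ P.restrictScalars A) ≤ d :=
    (supportDim_quotient_restrictScalars_le P).trans hd
  have hd₀ : Module.supportDim A (A ⧸ P₀) ≤ d :=
    (supportDim_quotient_comap_le P).trans hd
  obtain ⟨S, hS, hSP⟩ := exists_isPrime_isBigO_sub_sum (ℳ := 𝒜) (p := p) hIA hIAh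
    (N := P.restrictScalars A) hP hdA
  refine ⟨S.count P₀, fun y => ?_⟩
  refine ((hSP y).add (isBigO_multiset_sum_sub_count S P₀ fun Q hQ hne =>
    isBigO_inv_frobeniusPoincareTerm hIA hIAh (hS Q hQ).2.1
      ((supportDim_quotient_add_one_le_of_lt (lt_of_le_of_ne (hann.le.trans (hS Q hQ).2.2)
        hne.symm)).trans hd₀) y)).congr_left fun n => ?_
  rw [frobeniusPoincareTerm_restrictScalars]
  ring

theorem exists_tendsto_frobeniusPoincareTerm_of_isGeometricallyReduced
    (hI : Function.Surjective (algebraMap k (R ⧸ I.radical))) (hIh : I.IsHomogeneous 𝒜)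
    {P : Ideal R} [P.IsPrime] [Algebra.IsGeometricallyReduced k (R ⧸ P)]
    (hP : P.IsHomogeneous 𝒜) {d : ℕ} (hd : Module.supportDim R (R ⧸ P) ≤ d) (y : ℂ) :
    ∃ l, Tendsto (frobeniusPoincareTerm k 𝒜 I p d P y) atTop (𝓝 l) := by
  have hp : (p : ℂ) ≠ 0 := mod_cast (Fact.out : p.Prime).ne_zero
  obtain ⟨σ, hσ⟩ := exists_isBigO_frobeniusPoincareTerm_sub_comap (p := p) hI hIh hP hd 1
  have hsum : Summable fun n => ((p : ℝ) ^ n)⁻¹ := by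
    simpa using summable_geometric_of_lt_one (r := (p : ℝ)⁻¹) (by positivity)
      (inv_lt_one_of_one_lt₀ (by exact_mod_cast (Fact.out : p.Prime).one_lt))
  refine exists_tendsto_of_isBigO_succ_sub_mul (ρ := σ / p ^ d)
    (isBigO_one_frobeniusPoincareTerm hI hIh hP hd y) (by positivity) hsum
    (((hσ (y / p)).const_mul_left ((p : ℂ) ^ d)⁻¹).congr_left fun n => ?_)
  rw [frobeniusPoincareTerm_subalgebraGrading, pow_one, mul_div_cancel₀ _ hp, add_comm 1 n]
  push_cast
  field_simp

theorem exists_tendsto_frobeniusPoincareTerm_of_isPrime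
    (hI : Function.Surjective (algebraMap k (R ⧸ I.radical))) (hIh : I.IsHomogeneous 𝒜)
    {P : Ideal R} [P.IsPrime] (hP : P.IsHomogeneous 𝒜) {d : ℕ}
    (hd : Module.supportDim R (R ⧸ P) ≤ d) (y : ℂ) :
    ∃ l, Tendsto (frobeniusPoincareTerm k 𝒜 I p d P y) atTop (𝓝 l) := by
  have hp : (p : ℂ) ≠ 0 := mod_cast (Fact.out : p.Prime).ne_zero
  have := CharP.nontrivial_of_char_ne_one (R := R) (Fact.out : p.Prime).ne_one
  have : CharP k p := (algebraMap k R).charP (algebraMap k R).injective p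
  obtain ⟨e, _⟩ := exists_isGeometricallyReduced_frobeniusSubalgebra k (R ⧸ P) p
  obtain ⟨σ, hσ⟩ := exists_isBigO_frobeniusPoincareTerm_sub_comap (p := p) hI hIh hP hd e
  have hq : 0 < p ^ e := Nat.pow_pos (Fact.out : p.Prime).pos
  let A := frobeniusSubalgebra k R (p ^ e)
  have : Module.Finite A R := finite_frobeniusSubalgebra hq
  have : Algebra.FiniteType k A := finiteType_frobeniusSubalgebra hq
  have : CharP A p := (algebraMap A R).charP Subtype.val_injective p
  have := isGeometricallyReduced_quotient_comap_frobeniusSubalgebra (k := k) P (p ^ e)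
  obtain ⟨l, hl⟩ := exists_tendsto_frobeniusPoincareTerm_of_isGeometricallyReduced (p := p)
    (surjective_algebraMap_quotient_radical_map (p := p) hI e)
    (isHomogeneous_map_toFrobeniusSubalgebra (p := p) hIh e)
    (isHomogeneous_comap_frobeniusSubalgebra (p := p) hP e)
    ((supportDim_quotient_comap_le P).trans hd) (y / p ^ e)
  refine ⟨(((p : ℂ) ^ e) ^ d)⁻¹ * (σ * l), (tendsto_add_atTop_iff_nat e).mp ?_⟩
  have h := (((hσ (y / p ^ e)).trans_tendsto tendsto_inv_pow_atTop).add (hl.const_mul ↑σ)).const_mul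
    ((((p : ℂ) ^ e) ^ d)⁻¹)
  rw [zero_add] at h
  refine h.congr fun n => ?_
  rw [sub_add_cancel, mul_div_cancel₀ _ (pow_ne_zero e hp), add_comm e n,
    inv_mul_cancel_left₀ (by positivity)]

theorem exists_tendsto_frobeniusPoincareTerm [Module.Finite R M]
    {ℳ : ℤ → Submodule k M} [Decomposition ℳ] [SetLike.GradedSMul 𝒜 ℳ]
    (hI : Function.Surjective (algebraMap k (R ⧸ I.radical))) (hIh : I.IsHomogeneous 𝒜)
    {N : Submodule R M} (hN : N.IsHomogeneous ℳ) {d : ℕ}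
    (hd : Module.supportDim R (M ⧸ N) ≤ d) (y : ℂ) :
    ∃ l, Tendsto (frobeniusPoincareTerm k ℳ I p d N y) atTop (𝓝 l) := by
  obtain ⟨S, hS, hSN⟩ := exists_isPrime_isBigO_sub_sum (ℳ := ℳ) (p := p) hI hIh hN hd
  have hlim : ∀ P ∈ S, ∃ l, Tendsto (frobeniusPoincareTerm k 𝒜 I p d P y) atTop (𝓝 l) :=
    fun P hP =>
      have := (hS P hP).1
      exists_tendsto_frobeniusPoincareTerm_of_isPrime hI hIh (hS P hP).2.1
        ((supportDim_quotient_le_of_annihilator_le (hS P hP).2.2).trans hd) y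
  choose! l hl using hlim
  refine ⟨(S.map l).sum, ?_⟩
  simpa using ((hSN y).trans_tendsto tendsto_inv_pow_atTop).add (tendsto_multiset_sum S hl)

end Convergence

section ResidueField

open DirectSum

variable {k R : Type*} [Field k] [CommRing R] [Algebra k R] {𝒜 : ℤ → Submodule k R}
  [GradedAlgebra 𝒜] {I : Ideal R}

/- Since `R/I` is Artinian, `x ^ n ≡ x ^ (n + 1) * y` modulo `I`; in degree `n * j` the right-hand
side involves only the component of `y` of degree `-j`. -/
theorem mem_radical_of_mem_of_pos (h𝒜 : ∀ t < 0, 𝒜 t = ⊥) (hIh : I.IsHomogeneous 𝒜)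
    [IsArtinian R (R ⧸ I)] {x : R} {j : ℤ} (hj : 0 < j) (hx : x ∈ 𝒜 j) : x ∈ I.radical := by
  obtain ⟨n, z, hz⟩ := IsArtinian.exists_pow_succ_smul_dvd x (1 : R ⧸ I)
  obtain ⟨y, rfl⟩ := Ideal.Quotient.mk_surjective z
  have hmem : x ^ (n + 1) * y - x ^ n ∈ I :=
    Ideal.Quotient.eq.mp (hz.trans (congrArg (Ideal.Quotient.mk I) (mul_one (x ^ n))))
  have hy : (decompose 𝒜 y (-j) : R) = 0 := by
    simpa [h𝒜 (-j) (neg_neg_of_pos hj)] using (decompose 𝒜 y (-j)).2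
  have hcomp : (decompose 𝒜 (x ^ (n + 1) * y) (n • j) : R) = 0 := by
    rw [show n • j = (n + 1) • j + -j by rw [succ_nsmul, add_neg_cancel_right],
      coe_decompose_mul_add_of_left_mem 𝒜 (SetLike.pow_mem_graded (n + 1) hx), hy, mul_zero]
  have hpow := hIh (n • j) hmem
  rw [decompose_sub, DirectSum.sub_apply, AddSubgroupClass.coe_sub, hcomp,
    decompose_of_mem_same 𝒜 (SetLike.pow_mem_graded n hx), zero_sub, neg_mem_iff] at hpow
  exact ⟨n, hpow⟩

theorem surjective_algebraMap_quotient_radical (h𝒜 : ∀ t < 0, 𝒜 t = ⊥)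
    (h𝒜_zero : ∀ x ∈ 𝒜 0, ∃ c : k, algebraMap k R c = x) (hIh : I.IsHomogeneous 𝒜)
    [IsArtinian R (R ⧸ I)] : Function.Surjective (algebraMap k (R ⧸ I.radical)) := by
  classical
  intro z
  obtain ⟨x, rfl⟩ := Ideal.Quotient.mk_surjective z
  change Ideal.Quotient.mk _ x ∈ (algebraMap k (R ⧸ I.radical)).range
  rw [← sum_support_decompose 𝒜 x, map_sum]
  refine sum_mem fun j _ => ?_
  have ha := (decompose 𝒜 x j).2
  generalize (decompose 𝒜 x j : R) = a at ha ⊢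
  obtain hj | rfl | hj := lt_trichotomy j 0
  · rw [h𝒜 j hj, Submodule.mem_bot] at ha
    rw [ha, map_zero]
    exact zero_mem _
  · obtain ⟨c, hc⟩ := h𝒜_zero a ha
    exact ⟨c, congrArg (Ideal.Quotient.mk I.radical) hc⟩
  · rw [Ideal.Quotient.eq_zero_iff_mem.mpr (mem_radical_of_mem_of_pos h𝒜 hIh hj ha)]
    exact zero_mem _

end ResidueField

section Additivity

open DirectSum
open scoped Topology

theorem isHomogeneous_bot {k R M : Type*} [Semiring k] [Semiring R] [AddCommMonoid M] [Module k M]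
    [Module R M] {ℳ : ℤ → Submodule k M} [Decomposition ℳ] :
    (⊥ : Submodule R M).IsHomogeneous ℳ := by
  rintro j _ rfl
  simp

variable {k R M' M M'' : Type*} [Field k] [CommRing R] [Algebra k R]
  [AddCommGroup M'] [Module R M'] [Module k M'] [IsScalarTower k R M']
  [AddCommGroup M] [Module R M] [Module k M] [IsScalarTower k R M]
  [AddCommGroup M''] [Module R M''] [Module k M''] [IsScalarTower k R M'']
  {ℳ' : ℤ → Submodule k M'} {ℳ : ℤ → Submodule k M} {ℳ'' : ℤ → Submodule k M''}

theorem fnGen_eq_frobeniusPoincareTerm (ℳ : ℤ → Submodule k M) (I : Ideal R) (p d n : ℕ) (y : ℂ) :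
    FnGen k ℳ I p d n y = frobeniusPoincareTerm k ℳ I p d ⊥ y n := by
  rw [FnGen, frobeniusPoincareTerm, hilbertSeries, bot_sup_eq, one_div, inv_pow, inv_mul_eq_div]
  congr 1
  refine tsum_congr fun j => ?_
  congr 2
  ring

theorem map_eq_of_surjective [Decomposition ℳ] [Decomposition ℳ''] {g : M →ₗ[R] M''}
    (hg : Function.Surjective g) (hgdeg : ∀ j, (ℳ j).map (g.restrictScalars k) ≤ ℳ'' j) (j : ℤ) :
    (ℳ j).map (g.restrictScalars k) = ℳ'' j := by
  refine (hgdeg j).antisymm fun z hz => ?_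
  obtain ⟨m, rfl⟩ := hg z
  refine ⟨decompose ℳ m j, (decompose ℳ m j).2, ?_⟩
  rw [← decompose_of_mem_same ℳ'' hz]
  exact (coe_decompose_map_of_injective g Function.injective_id
    (fun i x hx => hgdeg i ⟨x, hx, rfl⟩) m j).symm

theorem quotPieceDim_comap {g : M →ₗ[R] M''} {j : ℤ}
    (hg : (ℳ j).map (g.restrictScalars k) = ℳ'' j) (Q : Submodule R M'') :
    quotPieceDim k ℳ (Q.comap g) j = quotPieceDim k ℳ'' Q j := by
  have hmap : ((ℳ j).map ((Q.comap g).mkQ.restrictScalars k)).map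
      (((Q.comap g).mapQ Q g le_rfl).restrictScalars k) =
      (ℳ'' j).map (Q.mkQ.restrictScalars k) := by
    rw [← hg, ← Submodule.map_comp, ← Submodule.map_comp]
    rfl
  rw [quotPieceDim, quotPieceDim, ← hmap]
  exact (Submodule.equivMapOfInjective (((Q.comap g).mapQ Q g le_rfl).restrictScalars k)
    (mapQ_comap_injective g Q) _).finrank_eq

theorem comap_sup_smul_top {g : M →ₗ[R] M''} (hg : Function.Surjective g) (N : Submodule R M'')
    (J : Ideal R) : (N ⊔ J • ⊤).comap g = N.comap g ⊔ J • ⊤ := by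
  have hmap : (N.comap g ⊔ J • ⊤).map g = N ⊔ J • ⊤ := by
    rw [Submodule.map_sup, Submodule.map_comap_eq_of_surjective hg, Submodule.map_smul'',
      Submodule.map_top, LinearMap.range_eq_top.mpr hg]
  rw [← hmap, Submodule.comap_map_eq_self ((LinearMap.ker_le_comap g).trans le_sup_left)]

theorem frobeniusPoincareTerm_comap [Decomposition ℳ] [Decomposition ℳ''] {g : M →ₗ[R] M''}
    (hg : Function.Surjective g) (hgdeg : ∀ j, (ℳ j).map (g.restrictScalars k) ≤ ℳ'' j)
    (I : Ideal R) (p d : ℕ) (N : Submodule R M'') (y : ℂ) (n : ℕ) :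
    frobeniusPoincareTerm k ℳ I p d (N.comap g) y n =
      frobeniusPoincareTerm k ℳ'' I p d N y n := by
  simp only [frobeniusPoincareTerm, hilbertSeries, ← comap_sup_smul_top hg,
    quotPieceDim_comap (map_eq_of_surjective hg hgdeg _)]

variable [Algebra.FiniteType k R] {p : ℕ} [Fact p.Prime] [CharP R p]
  {𝒜 : ℤ → Submodule k R} [GradedAlgebra 𝒜] {I : Ideal R}
  [Module.Finite R M'] [Decomposition ℳ'] [SetLike.GradedSMul 𝒜 ℳ']
  [Module.Finite R M] [Decomposition ℳ] [SetLike.GradedSMul 𝒜 ℳ]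
  [Module.Finite R M''] [Decomposition ℳ''] [SetLike.GradedSMul 𝒜 ℳ'']

theorem exists_tendsto_fnGen (hI : Function.Surjective (algebraMap k (R ⧸ I.radical)))
    (hIh : I.IsHomogeneous 𝒜) {d : ℕ} (hd : Module.supportDim R M ≤ d) (y : ℂ) :
    ∃ l, Tendsto (fun n => FnGen k ℳ I p d n y) atTop (𝓝 l) := by
  simp only [fnGen_eq_frobeniusPoincareTerm]
  exact exists_tendsto_frobeniusPoincareTerm hI hIh isHomogeneous_bot
    ((Module.supportDim_le_of_surjective _ (Submodule.mkQ_surjective ⊥)).trans hd) y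

theorem frobenius_poincare_additive_general
    (hI : Function.Surjective (algebraMap k (R ⧸ I.radical))) (hIh : I.IsHomogeneous 𝒜)
    {f : M' →ₗ[R] M} {g : M →ₗ[R] M''} (hf : Function.Injective f) (hg : Function.Surjective g)
    (hfg : LinearMap.range f = LinearMap.ker g)
    (hfdeg : ∀ j, (ℳ' j).map (f.restrictScalars k) ≤ ℳ j)
    (hgdeg : ∀ j, (ℳ j).map (g.restrictScalars k) ≤ ℳ'' j)
    {d : ℕ} (hd : Module.supportDim R M ≤ d) (y : ℂ) :
    ∃ L' L L'' : ℂ,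
      Tendsto (fun n => FnGen k ℳ' I p d n y) atTop (𝓝 L') ∧
      Tendsto (fun n => FnGen k ℳ I p d n y) atTop (𝓝 L) ∧
      Tendsto (fun n => FnGen k ℳ'' I p d n y) atTop (𝓝 L'') ∧
      L = L' + L'' := by
  obtain ⟨L', hL'⟩ := exists_tendsto_fnGen (ℳ := ℳ') (p := p) hI hIh
    ((Module.supportDim_le_of_injective f hf).trans hd) y
  obtain ⟨L, hL⟩ := exists_tendsto_fnGen (ℳ := ℳ) (p := p) hI hIh hd y
  obtain ⟨L'', hL''⟩ := exists_tendsto_fnGen (ℳ := ℳ'') (p := p) hI hIh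
    ((Module.supportDim_le_of_surjective g hg).trans hd) y
  refine ⟨L', L, L'', hL', hL, hL'', (eq_of_sub_eq_zero (tendsto_nhds_unique
    ((hL'.add hL'').sub hL) ?_)).symm⟩
  have hses := isBigO_frobeniusPoincareTerm_comap_add_sub (ℳ' := ℳ') (p := p) hI hIh (b := 0)
    (fun j x hx => (add_zero j).symm ▸ hfdeg j ⟨x, hx, rfl⟩) (isHomogeneous_bot (ℳ := ℳ))
    ((Module.supportDim_le_of_surjective _ (Submodule.mkQ_surjective ⊥)).trans hd) y
  refine (hses.trans_tendsto tendsto_inv_pow_atTop).congr fun n => ?_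
  simp only [fnGen_eq_frobeniusPoincareTerm, ← frobeniusPoincareTerm_comap hg hgdeg]
  rw [bot_sup_eq, hfg, Submodule.comap_bot, Submodule.comap_bot, LinearMap.ker_eq_bot.mpr hf]

end Additivity

/-- **Additivity of Frobenius–Poincaré functions over short exact sequences.**
For a degree-preserving short exact sequence `0 → M' → M → M'' → 0` of finitely generated
`ℤ`-graded `R`-modules, with `d = dim M`, the three Frobenius–Poincaré limits exist and
`F(M,R,I,d) = F(M',R,I,d) + F(M'',R,I,d)`. -/
theorem frobenius_poincare_additive
    (k R M' M M'' : Type) [Field k] [CommRing R] [Algebra k R] [Algebra.FiniteType k R]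
    (p : ℕ) (hp : p.Prime) [CharP R p]
    (𝒜 : ℤ → Submodule k R) [GradedAlgebra 𝒜]
    (h𝒜neg : ∀ t : ℤ, t < 0 → 𝒜 t = ⊥)
    (h𝒜zero : ∀ x ∈ 𝒜 0, ∃ c : k, algebraMap k R c = x)
    (I : Ideal R) (hI : Ideal.IsHomogeneous 𝒜 I) (hIfl : IsFiniteLength R (R ⧸ I))
    [AddCommGroup M'] [Module R M'] [Module k M'] [IsScalarTower k R M'] [Module.Finite R M']
    [AddCommGroup M] [Module R M] [Module k M] [IsScalarTower k R M] [Module.Finite R M]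
    [AddCommGroup M''] [Module R M''] [Module k M''] [IsScalarTower k R M''] [Module.Finite R M'']
    (ℳ' : ℤ → Submodule k M') [DirectSum.Decomposition ℳ']
    (hℳ' : ∀ (a b : ℤ), ∀ r ∈ 𝒜 a, ∀ x ∈ ℳ' b, r • x ∈ ℳ' (a + b))
    (ℳ : ℤ → Submodule k M) [DirectSum.Decomposition ℳ]
    (hℳ : ∀ (a b : ℤ), ∀ r ∈ 𝒜 a, ∀ x ∈ ℳ b, r • x ∈ ℳ (a + b))
    (ℳ'' : ℤ → Submodule k M'') [DirectSum.Decomposition ℳ'']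
    (hℳ'' : ∀ (a b : ℤ), ∀ r ∈ 𝒜 a, ∀ x ∈ ℳ'' b, r • x ∈ ℳ'' (a + b))
    (f : M' →ₗ[R] M) (g : M →ₗ[R] M'')
    (hf : Function.Injective f) (hg : Function.Surjective g)
    (hfg : LinearMap.range f = LinearMap.ker g)
    (hfdeg : ∀ j : ℤ, (ℳ' j).map (f.restrictScalars k) ≤ ℳ j)
    (hgdeg : ∀ j : ℤ, (ℳ j).map (g.restrictScalars k) ≤ ℳ'' j)
    (d : ℕ) (hd : ringKrullDim (R ⧸ Module.annihilator R M) = d)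
    (y : ℂ) :
    ∃ L' L L'' : ℂ,
      Tendsto (fun n : ℕ => FnGen k ℳ' I p d n y) atTop (nhds L') ∧
      Tendsto (fun n : ℕ => FnGen k ℳ I p d n y) atTop (nhds L) ∧
      Tendsto (fun n : ℕ => FnGen k ℳ'' I p d n y) atTop (nhds L'') ∧
      L = L' + L'' := by
  have : Fact p.Prime := ⟨hp⟩
  have : IsArtinian R (R ⧸ I) := (isFiniteLength_iff_isNoetherian_isArtinian.mp hIfl).2
  have : SetLike.GradedSMul 𝒜 ℳ' := ⟨fun {_ _ _ _} hr hx => hℳ' _ _ _ hr _ hx⟩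
  have : SetLike.GradedSMul 𝒜 ℳ := ⟨fun {_ _ _ _} hr hx => hℳ _ _ _ hr _ hx⟩
  have : SetLike.GradedSMul 𝒜 ℳ'' := ⟨fun {_ _ _ _} hr hx => hℳ'' _ _ _ hr _ hx⟩
  exact frobenius_poincare_additive_general
    (surjective_algebraMap_quotient_radical h𝒜neg h𝒜zero hI) hI hf hg hfg hfdeg hgdeg
    ((Module.supportDim_eq_ringKrullDim_quotient_annihilator R M).trans hd).le y

end
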